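/- For every ε > 0 there exists N such that for all n ≥ N and every finite abelian group G of order n with ΣG = 0, the number T of additive triples, i.e. triples (π₁, π₂, π₃) ∈ S³ with π₁ + π₂ = π₃, satisfies |T · n^{n−1}/(n!)³ − e^{−1/2}| ≤ ε. -/

import Mathlib

/-!
Write `n = #G`. For a tuple `χ` of characters let `φ(χ)` be the average of `∏ χ_i(x_i)` over
injective tuples `x` in `G` (`phi`). For `n`-tuples this is the Fourier transform of the uniform
measure on bijections, and Fourier inversion (`triple_count`) gives `T · n^(n-1) / (n!)³ = n⁻¹ ∑_χ
φ(χ)³`, the sum running over all `n`-tuples of characters. Because `∑ x, x = 0`, `φ` is invariant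
under adding a fixed character to all entries (`phi_add_const`).

*Sparse tuples.* Fix a large constant `q`. Tuples in which some character occurs with exactly `m ≤
n/q` exceptions contribute, by this invariance, `n · C(n,m) · S_m`, where `S_m` is the sum of `φ³`
over `m`-tuples of nontrivial characters (`sum_decomp`). Conditioning on all coordinates but one
gives `(n - m) φ(r, χ) = -∑_i φ(χ with χ_i replaced by χ_i + r)` for `r ≠ 0` (`phi_cons`). This
yields an exact recursion for the second moments `A_m` (`A_rec`), hence good bounds on them. Cubing
it and keeping only the indices with `χ_i + r = 0`, at which the tuple gets shorter, yields
`n^(m+2) S_{m+2} = -(m+1) n^m S_m + O(n^(-1/2))` (`S_rec`). So `n^m S_m` tends to the numbers `ell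
m` with `ell (m+2) = -(m+1) ell m`, and `∑ ell m / m! = e^(-1/2)` (`hasSum_ell`).

*Uniform bounds.* The limit may be exchanged with the sum over `m` thanks to a Hadamard-type
estimate for `φ` in terms of the multiplicities of the characters (`hadamard`): extract a
coefficient of `∏_x ∑_ψ z_ψ ψ(x)` and bound this product by AM–GM and Parseval. For `m`-tuples with
many distinct characters the estimate improves on the generic size of `φ` and is combined with
`A_m`; tuples with few distinct characters are counted by type (`sparse_bound`).

*Dense tuples.* If no character has multiplicity at least `(1 - 1/q) n`, the same estimate together
with the multinomial bound on the number of tuples of a given type shows that the total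
contribution is exponentially small (`dense_bound`, `tendsto_dense`).
-/

namespace AddTriples

open Finset
open scoped Classical

set_option linter.unusedSectionVars false

/-! ### Fourier coefficients of random injections -/

section Fourier

variable {G : Type} [AddCommGroup G] [Fintype G]

/-- The average of `∏ i, χ i (x i)` over all injections `x : ι ↪ G`. When `#ι = #G` this is the
Fourier coefficient at `χ` of the uniform probability measure on the set of bijections. Its value
is real (`ofReal_phi`); `phi` is the real-valued version. -/
noncomputable def cphi {ι : Type} [Fintype ι] (χ : ι → AddChar G ℂ) : ℂ :=
  (∑ x : ι ↪ G, ∏ i, χ i (x i)) / ((Fintype.card G).descFactorial (Fintype.card ι) : ℂ)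

/-- The coefficient `cphi χ` as a real number; no information is lost, see `ofReal_phi`. -/
noncomputable def phi {ι : Type} [Fintype ι] (χ : ι → AddChar G ℂ) : ℝ := (cphi χ).re

/-- The coefficients are real, since `x ↦ -x` permutes the injections and conjugates each product.
-/
lemma ofReal_phi {ι : Type} [Fintype ι] (χ : ι → AddChar G ℂ) : (phi χ : ℂ) = cphi χ := by
  unfold phi
  rw [← Complex.conj_eq_iff_re]
  unfold cphi
  rw [map_div₀, map_sum]
  congr 1
  · refine Fintype.sum_equiv ((Equiv.refl ι).embeddingCongr (Equiv.neg G)) _ _ fun x => ?_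
    rw [map_prod]
    refine Finset.prod_congr rfl fun i _ => ?_
    rw [← AddChar.map_neg_eq_conj]
    rfl
  · simp

lemma cphi_comp {ι κ : Type} [Fintype ι] [Fintype κ] (e : κ ≃ ι) (χ : ι → AddChar G ℂ) :
    cphi (χ ∘ e) = cphi χ := by
  unfold cphi
  rw [Fintype.card_congr e]
  congr 1
  refine Fintype.sum_equiv (e.embeddingCongr (Equiv.refl G)) _ _ fun x => ?_
  refine Fintype.prod_equiv e _ _ fun i => ?_
  simp [Equiv.embeddingCongr]

lemma phi_comp {ι κ : Type} [Fintype ι] [Fintype κ] (e : κ ≃ ι) (χ : ι → AddChar G ℂ) :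
    phi (χ ∘ e) = phi χ := by
  unfold phi; rw [cphi_comp]

/-- Coordinates carrying the trivial character can be dropped: a uniform injection on `α ⊕ β`
restricts to a uniform injection on `α`. -/
lemma cphi_sum_elim_zero {α β : Type} [Fintype α] [Fintype β]
    (h : Fintype.card α + Fintype.card β ≤ Fintype.card G) (χ : α → AddChar G ℂ) :
    cphi (Sum.elim χ (fun _ : β => 0)) = cphi χ := by
  unfold cphi
  have h1 : ∑ x : α ⊕ β ↪ G, ∏ i, (Sum.elim χ (fun _ : β => 0)) i (x i)
      = ((Fintype.card G - Fintype.card α).descFactorial (Fintype.card β) : ℂ) *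
        ∑ x : α ↪ G, ∏ i, χ i (x i) := by
    rw [← (Equiv.sumEmbeddingEquivSigmaEmbeddingRestricted (α := α) (β := β) (γ := G)).symm.sum_comp,
      Fintype.sum_sigma, Finset.mul_sum]
    refine Finset.sum_congr rfl fun f _ => ?_
    have : ∀ y : β ↪ ↥(Set.range f)ᶜ, ∏ i, (Sum.elim χ (fun _ : β => 0)) i
        ((Equiv.sumEmbeddingEquivSigmaEmbeddingRestricted.symm ⟨f, y⟩ : α ⊕ β ↪ G) i)
        = ∏ i, χ i (f i) := by
      intro y
      rw [Fintype.prod_sum_type]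
      simp only [Sum.elim_inl, Sum.elim_inr, AddChar.zero_apply, Finset.prod_const_one, mul_one]
      rfl
    rw [Finset.sum_congr rfl fun y _ => this y, Finset.sum_const, nsmul_eq_mul]
    congr 2
    rw [Finset.card_univ, Fintype.card_embedding_eq, Fintype.card_compl_set,
      Set.card_range_of_injective f.injective]
  rw [h1, Fintype.card_sum]
  have h2 := Nat.descFactorial_mul_descFactorial (n := Fintype.card G)
    (Nat.le_add_right (Fintype.card α) (Fintype.card β))
  rw [Nat.add_sub_cancel_left] at h2
  rw [← h2, Nat.cast_mul]
  have h3 : ((Fintype.card G - Fintype.card α).descFactorial (Fintype.card β) : ℂ) ≠ 0 := by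
    rw [Nat.cast_ne_zero, ← Nat.pos_iff_ne_zero, Nat.descFactorial_pos]
    omega
  rw [mul_div_mul_left _ _ h3]

lemma phi_sum_elim_zero {α β : Type} [Fintype α] [Fintype β]
    (h : Fintype.card α + Fintype.card β ≤ Fintype.card G) (χ : α → AddChar G ℂ) :
    phi (Sum.elim χ (fun _ : β => 0)) = phi χ := by
  unfold phi; rw [cphi_sum_elim_zero h]

/-- The recursion behind all moment computations. Given the values at the other coordinates, the
new coordinate runs over `G` minus those `m` values; summing `r` over all of `G` gives the first
summand by orthogonality, and each excluded value turns `χ i` into `χ i + r`. -/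
lemma cphi_cons {m : ℕ} (hm : m < Fintype.card G) (r : AddChar G ℂ) (χ : Fin m → AddChar G ℂ) :
    ((Fintype.card G : ℂ) - m) * cphi (Fin.cons r χ : Fin (m + 1) → AddChar G ℂ) =
      (if r = 0 then (Fintype.card G : ℂ) else 0) * cphi χ
        - ∑ i, cphi (Function.update χ i (χ i + r)) := by
  have hd : ((Fintype.card G).descFactorial m : ℂ) ≠ 0 := by
    rw [Nat.cast_ne_zero, ← Nat.pos_iff_ne_zero, Nat.descFactorial_pos]; omega
  have hnm : ((Fintype.card G : ℂ) - m) ≠ 0 := by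
    rw [sub_ne_zero]; exact_mod_cast hm.ne'
  have key : ∑ x : Fin (m + 1) ↪ G, ∏ i, (Fin.cons r χ : Fin (m + 1) → AddChar G ℂ) i (x i)
      = (if r = 0 then (Fintype.card G : ℂ) else 0) * ∑ x : Fin m ↪ G, ∏ i, χ i (x i)
        - ∑ j, ∑ x : Fin m ↪ G, ∏ i, (Function.update χ j (χ j + r)) i (x i) := by
    rw [← (Equiv.embeddingFinSucc m G).symm.sum_comp, Fintype.sum_sigma, Finset.mul_sum,
      Finset.sum_comm, ← Finset.sum_sub_distrib]
    refine Finset.sum_congr rfl fun f _ => ?_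
    have h1 : ∀ y : {i // i ∉ Set.range f}, ∏ i, (Fin.cons r χ : Fin (m + 1) → AddChar G ℂ) i
        (((Equiv.embeddingFinSucc m G).symm ⟨f, y⟩ : Fin (m + 1) ↪ G) i)
        = r y * ∏ i, χ i (f i) := by
      intro y
      rw [Fin.prod_univ_succ]
      simp
    have h2 : ∀ j, ∏ i, (Function.update χ j (χ j + r)) i (f i) = r (f j) * ∏ i, χ i (f i) := by
      intro j
      rw [← Finset.mul_prod_erase _ _ (Finset.mem_univ j),
        ← Finset.mul_prod_erase _ (fun i => χ i (f i)) (Finset.mem_univ j)]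
      rw [Finset.prod_congr (s₁ := univ.erase j) (g := fun i => χ i (f i)) rfl]
      · simp [AddChar.add_apply]; ring
      · intro i hi
        rw [Function.update_of_ne (Finset.ne_of_mem_erase hi)]
    rw [Finset.sum_congr rfl fun y _ => h1 y, Finset.sum_congr rfl fun y _ => h2 y,
      ← Finset.sum_mul, ← Finset.sum_mul, ← sub_mul]
    congr 1
    rw [eq_sub_iff_add_eq, ← AddChar.sum_eq_ite r]
    have h3 : ∑ j, r (f j) = ∑ y : {i // i ∈ Set.range f}, r y :=
      Fintype.sum_equiv (Equiv.ofInjective f f.injective) _ _ fun j => rfl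
    rw [h3, add_comm]
    convert Fintype.sum_subtype_add_sum_subtype (fun y => y ∈ Set.range f) (fun y => r y)
  unfold cphi
  simp only [Fintype.card_fin]
  rw [key, Nat.descFactorial_succ, Nat.cast_mul, Nat.cast_sub hm.le, ← Finset.sum_div]
  field_simp

lemma phi_cons {m : ℕ} (hm : m < Fintype.card G) (r : AddChar G ℂ) (χ : Fin m → AddChar G ℂ) :
    ((Fintype.card G : ℝ) - m) * phi (Fin.cons r χ : Fin (m + 1) → AddChar G ℂ) =
      (if r = 0 then (Fintype.card G : ℝ) else 0) * phi χ
        - ∑ i, phi (Function.update χ i (χ i + r)) := by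
  have := cphi_cons hm r χ
  simp only [← ofReal_phi] at this
  split_ifs at this ⊢ <;> exact_mod_cast this

lemma phi_cons_zero {m : ℕ} (hm : m < Fintype.card G) (χ : Fin m → AddChar G ℂ) :
    phi (Fin.cons 0 χ : Fin (m + 1) → AddChar G ℂ) = phi χ := by
  have h := phi_cons hm 0 χ
  simp only [if_true, add_zero, Function.update_eq_self, Finset.sum_const, Finset.card_univ,
    Fintype.card_fin, nsmul_eq_mul, ← sub_mul] at h
  have hnm : ((Fintype.card G : ℝ) - m) ≠ 0 := by
    rw [sub_ne_zero]; exact_mod_cast hm.ne'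
  exact mul_left_cancel₀ hnm h

lemma phi_insertNth {m : ℕ} (i : Fin (m + 1)) (r : AddChar G ℂ) (χ : Fin m → AddChar G ℂ) :
    phi (i.insertNth r χ : Fin (m + 1) → AddChar G ℂ)
      = phi (Fin.cons r χ : Fin (m + 1) → AddChar G ℂ) := by
  rw [← phi_comp ((finSuccEquiv' i).trans (finSuccEquiv m).symm) (Fin.cons r χ)]
  congr 1
  funext j
  refine Fin.succAboveCases i ?_ (fun j => ?_) j
  · simp
  · simp

end Fourier
/-! ### Counting triples by Fourier inversion -/

section Fourier

variable {G : Type} [AddCommGroup G] [Fintype G]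

lemma sum_prod_char {ι : Type} [Fintype ι] [DecidableEq ι] (w : ι → G) :
    ∑ χ : ι → AddChar G ℂ, ∏ i, χ i (w i)
      = if w = 0 then (Fintype.card G : ℂ) ^ Fintype.card ι else 0 := by
  have h := (Finset.prod_univ_sum (fun _ : ι => (univ : Finset (AddChar G ℂ)))
    (fun i ψ => ψ (w i))).symm
  rw [Fintype.piFinset_univ] at h
  rw [h]
  simp only [AddChar.sum_apply_eq_ite]
  split_ifs with hw
  · simp [hw]
  · obtain ⟨i, hi⟩ := Function.ne_iff.1 hw
    exact Finset.prod_eq_zero (Finset.mem_univ i) (if_neg hi)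

/-- Fourier inversion: the cube of `cphi` is a sum over triples of bijections, and summing over `χ`
retains those with `x + y + z = 0`, which correspond to additive triples via `z ↦ -z`. -/
lemma sum_cphi_cube {n : ℕ} (hn : Fintype.card G = n) :
    ∑ χ : Fin n → AddChar G ℂ, cphi χ ^ 3
      = (n : ℂ) ^ n * (Nat.card {p : (Fin n → G) × (Fin n → G) × (Fin n → G) //
            Function.Bijective p.1 ∧ Function.Bijective p.2.1 ∧ Function.Bijective p.2.2 ∧
            p.1 + p.2.1 = p.2.2} : ℂ) / (n.factorial : ℂ) ^ 3 := by
  have hc : ∀ x : Fin n ↪ G, Function.Bijective x := fun x =>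
    (Fintype.bijective_iff_injective_and_card x).2 ⟨x.injective, by simp [hn]⟩
  have key : ∑ χ : Fin n → AddChar G ℂ, (∑ x : Fin n ↪ G, ∏ i, χ i (x i)) ^ 3
      = ∑ x : Fin n ↪ G, ∑ y : Fin n ↪ G, ∑ z : Fin n ↪ G,
        if (⇑x + ⇑y + ⇑z : Fin n → G) = 0 then (n : ℂ) ^ n else 0 := by
    have h1 : ∀ χ : Fin n → AddChar G ℂ, (∑ x : Fin n ↪ G, ∏ i, χ i (x i)) ^ 3
        = ∑ x : Fin n ↪ G, ∑ y : Fin n ↪ G, ∑ z : Fin n ↪ G,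
          ∏ i, χ i ((⇑x + ⇑y + ⇑z : Fin n → G) i) := by
      intro χ
      simp only [Pi.add_apply, AddChar.map_add_eq_mul, Finset.prod_mul_distrib]
      simp only [← Finset.mul_sum, ← Finset.sum_mul]
      ring
    rw [Finset.sum_congr rfl fun χ _ => h1 χ, Finset.sum_comm]
    refine Finset.sum_congr rfl fun x _ => ?_
    rw [Finset.sum_comm]
    refine Finset.sum_congr rfl fun y _ => ?_
    rw [Finset.sum_comm]
    refine Finset.sum_congr rfl fun z _ => ?_
    rw [sum_prod_char, hn, Fintype.card_fin]
  have h2 : Nat.card {p : (Fin n → G) × (Fin n → G) × (Fin n → G) //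
            Function.Bijective p.1 ∧ Function.Bijective p.2.1 ∧ Function.Bijective p.2.2 ∧
            p.1 + p.2.1 = p.2.2}
      = Nat.card {p : (Fin n ↪ G) × (Fin n ↪ G) × (Fin n ↪ G) //
          (⇑p.1 + ⇑p.2.1 + ⇑p.2.2 : Fin n → G) = 0} := by
    refine Nat.card_congr
      { toFun := fun p => ⟨(⟨p.1.1, p.2.1.injective⟩, ⟨p.1.2.1, p.2.2.1.injective⟩,
          ⟨-p.1.2.2, neg_injective.comp p.2.2.2.1.injective⟩), ?_⟩
        invFun := fun p => ⟨(p.1.1, p.1.2.1, -p.1.2.2), hc _, hc _, ?_, ?_⟩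
        left_inv := fun p => ?_
        right_inv := fun p => ?_ }
    · have := p.2.2.2.2
      change p.1.1 + p.1.2.1 + -p.1.2.2 = 0
      rw [this, add_neg_cancel]
    · exact (Equiv.neg G).bijective.comp (hc p.1.2.2)
    · exact eq_neg_of_add_eq_zero_left p.2
    · apply Subtype.ext
      change (p.1.1, p.1.2.1, - -p.1.2.2) = p.1
      rw [neg_neg]
    · ext <;> simp
  have h3 : (∑ x : Fin n ↪ G, ∑ y : Fin n ↪ G, ∑ z : Fin n ↪ G,
        if (⇑x + ⇑y + ⇑z : Fin n → G) = 0 then (n : ℂ) ^ n else 0)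
      = (n : ℂ) ^ n * (Nat.card {p : (Fin n ↪ G) × (Fin n ↪ G) × (Fin n ↪ G) //
          (⇑p.1 + ⇑p.2.1 + ⇑p.2.2 : Fin n → G) = 0} : ℂ) := by
    rw [Nat.card_eq_fintype_card, Fintype.card_subtype]
    rw [mul_comm, ← nsmul_eq_mul, ← Finset.sum_const, Finset.sum_filter, Fintype.sum_prod_type]
    refine Finset.sum_congr rfl fun x _ => ?_
    rw [Fintype.sum_prod_type]
  rw [h2, ← h3, ← key, Finset.sum_div]
  refine Finset.sum_congr rfl fun χ _ => ?_
  rw [cphi, hn, Fintype.card_fin, Nat.descFactorial_self, div_pow]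

lemma triple_count {n : ℕ} (hn : Fintype.card G = n) (h0 : 0 < n) :
    (Nat.card {p : (Fin n → G) × (Fin n → G) × (Fin n → G) //
            Function.Bijective p.1 ∧ Function.Bijective p.2.1 ∧ Function.Bijective p.2.2 ∧
            p.1 + p.2.1 = p.2.2} : ℝ) * (n : ℝ) ^ (n - 1) / (n.factorial : ℝ) ^ 3
      = (∑ χ : Fin n → AddChar G ℂ, phi χ ^ 3) / n := by
  have h := sum_cphi_cube (G := G) hn
  simp only [← ofReal_phi] at h
  have h' : ∑ χ : Fin n → AddChar G ℂ, phi χ ^ 3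
      = (n : ℝ) ^ n * (Nat.card {p : (Fin n → G) × (Fin n → G) × (Fin n → G) //
            Function.Bijective p.1 ∧ Function.Bijective p.2.1 ∧ Function.Bijective p.2.2 ∧
            p.1 + p.2.1 = p.2.2} : ℝ) / (n.factorial : ℝ) ^ 3 := by
    apply Complex.ofReal_injective
    push_cast
    exact h
  rw [h']
  obtain ⟨k, rfl⟩ := Nat.exists_eq_succ_of_ne_zero h0.ne'
  have : ((k.succ : ℕ) : ℝ) ≠ 0 := by positivity
  have h2 : ((k.succ.factorial : ℕ) : ℝ) ≠ 0 := by positivity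
  rw [Nat.succ_sub_one]
  field_simp
  rw [Nat.succ_eq_add_one, pow_succ]
  ring

/-- Twisting every coordinate by `ψ` multiplies each product by `ψ (∑ x, x) = 1`. -/
lemma phi_add_const {n : ℕ} (hn : Fintype.card G = n) (hG : ∑ x : G, x = 0)
    (χ : Fin n → AddChar G ℂ) (ψ : AddChar G ℂ) : phi (fun i => χ i + ψ) = phi χ := by
  unfold phi cphi
  congr 2
  refine Finset.sum_congr rfl fun x _ => ?_
  simp only [AddChar.add_apply, Finset.prod_mul_distrib]
  have hb : Function.Bijective x :=
    (Fintype.bijective_iff_injective_and_card x).2 ⟨x.injective, by simp [hn]⟩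
  have : ∏ i, ψ (x i) = 1 := by
    have hs : ∀ s : Finset G, ψ (∑ y ∈ s, y) = ∏ y ∈ s, ψ y := by
      intro s
      induction s using Finset.induction_on with
      | empty => simp
      | insert a s ha ih => rw [Finset.sum_insert ha, Finset.prod_insert ha,
          AddChar.map_add_eq_mul, ih]
    rw [hb.prod_comp (fun y => ψ y), ← hs, hG, AddChar.map_zero_eq_one]
  rw [this, mul_one]

/-- Summing over all ways to split `t = r + (t - r)` between two coordinates `u ≠ v` detects `x u =
x v`, which never happens for an injection. -/
lemma sum_phi_split {m : ℕ} (i : Fin (m + 1)) (t : AddChar G ℂ) (χ : Fin m → AddChar G ℂ) :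
    ∑ r : AddChar G ℂ, phi (Fin.cons r (i.insertNth (t - r) χ : Fin (m + 1) → AddChar G ℂ) :
      Fin (m + 2) → AddChar G ℂ) = 0 := by
  have : ∑ r : AddChar G ℂ, cphi (Fin.cons r (i.insertNth (t - r) χ : Fin (m + 1) → AddChar G ℂ) :
      Fin (m + 2) → AddChar G ℂ) = 0 := by
    unfold cphi
    rw [← Finset.sum_div, Finset.sum_comm]
    rw [Finset.sum_eq_zero, zero_div]
    intro x _
    have h1 : ∀ r : AddChar G ℂ, ∏ j, (Fin.cons r (i.insertNth (t - r) χ :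
        Fin (m + 1) → AddChar G ℂ) : Fin (m + 2) → AddChar G ℂ) j (x j)
        = r (x 0 - x i.succ) * (t (x i.succ) * ∏ j, χ j (x (i.succAbove j).succ)) := by
      intro r
      rw [Fin.prod_univ_succ]
      simp only [Fin.cons_zero, Fin.cons_succ]
      rw [Fin.prod_univ_succAbove _ i]
      simp only [Fin.insertNth_apply_same, Fin.insertNth_apply_succAbove]
      rw [sub_eq_add_neg, sub_eq_add_neg, AddChar.add_apply, AddChar.map_add_eq_mul,
        AddChar.neg_apply]
      ring
    rw [Finset.sum_congr rfl fun r _ => h1 r, ← Finset.sum_mul, AddChar.sum_apply_eq_ite,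
      if_neg, zero_mul]
    rw [sub_eq_zero]
    exact fun h => Fin.succ_ne_zero i (x.injective h).symm
  simp only [← ofReal_phi] at this
  exact_mod_cast this

end Fourier
/-! ### A Hadamard-type bound -/

/-- The multiplicity of the value `a` in the tuple `f`; the function `cnt f` is the *type* of `f`.
-/
noncomputable def cnt {ι X : Type} [Fintype ι] (f : ι → X) (a : X) : ℕ :=
  #{i | f i = a}

lemma prod_comp_cnt {ι X M : Type} [Fintype ι] [Fintype X] [CommMonoid M] (f : ι → X) (F : X → M) :
    ∏ i, F (f i) = ∏ a, F a ^ cnt f a := by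
  rw [← Finset.prod_fiberwise' univ f F]
  refine Finset.prod_congr rfl fun a _ => ?_
  rw [Finset.prod_const]
  rfl

lemma sum_cnt {ι X : Type} [Fintype ι] [Fintype X] (f : ι → X) :
    ∑ a, cnt f a = Fintype.card ι := by
  unfold cnt
  rw [← Finset.card_univ, ← Finset.card_eq_sum_card_fiberwise (fun i _ => Finset.mem_univ (f i))]

lemma cnt_le {ι X : Type} [Fintype ι] (f : ι → X) (a : X) :
    cnt f a ≤ Fintype.card ι := Finset.card_le_univ _

/-- The number of ways to transport `χ` along a bijection onto a given `g` of the same type is the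
product of the factorials of the multiplicities. -/
lemma card_fiber_equiv {ι G X : Type} [Fintype ι] [Fintype G] [Fintype X] (χ : ι → X) (g : G → X) :
    #{σ : ι ≃ G | χ ∘ σ.symm = g} = if cnt g = cnt χ then ∏ a, (cnt χ a).factorial else 0 := by
  split_ifs with h
  · have hf : ∀ c, Nonempty ({i // χ i = c} ≃ {x // g x = c}) := by
      intro c
      refine ⟨Fintype.equivOfCardEq ?_⟩
      rw [Fintype.card_subtype, Fintype.card_subtype]
      exact (congrFun h c).symm
    let e := fun c => (hf c).some
    set σ₀ : ι ≃ G := Equiv.ofFiberEquiv e with hσ₀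
    have hσ : ∀ i, g (σ₀ i) = χ i := fun i => Equiv.ofFiberEquiv_map e i
    have h1 : ∏ a, (cnt χ a).factorial = Fintype.card {τ : Equiv.Perm ι // χ ∘ τ = χ} := by
      rw [DomMulAct.stabilizer_card]
      refine Finset.prod_congr rfl fun a _ => ?_
      rw [Fintype.card_subtype]; rfl
    rw [h1, ← Fintype.card_subtype]
    refine Fintype.card_congr
      { toFun := fun σ => ⟨σ₀.trans σ.1.symm, ?_⟩
        invFun := fun τ => ⟨τ.1.symm.trans σ₀, ?_⟩
        left_inv := fun σ => ?_
        right_inv := fun τ => ?_ }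
    · funext i
      have := congrFun σ.2 (σ₀ i)
      simp only [Function.comp_apply] at this
      simp [this, hσ]
    · funext x
      have := congrFun τ.2 (σ₀.symm x)
      simp only [Function.comp_apply] at this
      simp [this, ← hσ]
    · ext; simp
    · ext; simp
  · rw [Finset.card_eq_zero, Finset.filter_eq_empty_iff]
    intro σ _ hσ
    apply h
    funext a
    unfold cnt
    refine Finset.card_equiv σ.symm ?_
    intro x
    simp [← hσ]

section Fourier

variable {G : Type} [AddCommGroup G] [Fintype G]

/-- Parseval's identity on `G`. -/
lemma sum_normSq_char (c : AddChar G ℂ → ℂ) :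
    ∑ x : G, ‖∑ ψ, c ψ * ψ x‖ ^ 2 = Fintype.card G * ∑ ψ, ‖c ψ‖ ^ 2 := by
  have : ∑ x : G, ((∑ ψ, c ψ * ψ x) * (starRingEnd ℂ) (∑ ψ, c ψ * ψ x))
      = Fintype.card G * ∑ ψ, c ψ * (starRingEnd ℂ) (c ψ) := by
    simp only [map_sum, map_mul, ← AddChar.map_neg_eq_conj, Finset.sum_mul_sum]
    rw [Finset.sum_comm, Finset.mul_sum]
    refine Finset.sum_congr rfl fun ψ _ => ?_
    rw [Finset.sum_comm, Finset.sum_eq_single ψ]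
    · rw [Finset.sum_congr rfl (g := fun _ => c ψ * (starRingEnd ℂ) (c ψ))]
      · simp
      · intro x _
        have : ψ x * ψ (-x) = 1 := by rw [← AddChar.map_add_eq_mul]; simp
        linear_combination (c ψ * (starRingEnd ℂ) (c ψ)) * this
    · intro ψ' _ hne
      have h1 : ∀ x, c ψ * ψ x * ((starRingEnd ℂ) (c ψ') * ψ' (-x))
          = c ψ * (starRingEnd ℂ) (c ψ') * (ψ - ψ') x := by
        intro x
        rw [sub_eq_add_neg ψ ψ', AddChar.add_apply, AddChar.neg_apply]; ring
      rw [Finset.sum_congr rfl fun x _ => h1 x, ← Finset.mul_sum, AddChar.sum_eq_ite, if_neg,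
        mul_zero]
      rw [sub_eq_zero]; exact hne.symm
    · simp
  simp only [Complex.mul_conj, Complex.normSq_eq_norm_sq] at this
  exact_mod_cast this

/-- AM–GM applied to the squared norms of the factors, whose mean is `1` by Parseval's identity. -/
lemma norm_prod_le (c : AddChar G ℂ → ℂ) (hc : ∑ ψ, ‖c ψ‖ ^ 2 = 1) :
    ‖∏ x : G, ∑ ψ, c ψ * ψ x‖ ≤ 1 := by
  have hn : (0 : ℝ) < Fintype.card G := by exact_mod_cast Fintype.card_pos
  have h := Real.geom_mean_le_arith_mean_weighted (univ : Finset G)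
    (fun _ => 1 / (Fintype.card G : ℝ)) (fun x => ‖∑ ψ, c ψ * ψ x‖ ^ 2)
    (fun _ _ => by positivity) (by simp) (fun _ _ => by positivity)
  rw [← Finset.mul_sum, sum_normSq_char, hc, mul_one, one_div_mul_cancel hn.ne',
    Real.finsetProd_rpow _ _ (fun _ _ => by positivity)] at h
  have h2 : ∏ x : G, ‖∑ ψ, c ψ * ψ x‖ ^ 2 ≤ 1 := by
    by_contra hlt
    push Not at hlt
    exact absurd h (not_le.2 (Real.one_lt_rpow hlt (by positivity)))
  rw [Finset.prod_pow, ← norm_prod] at h2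
  exact (sq_le_one_iff₀ (norm_nonneg _)).1 h2

/-- The quantity on the left is the part of `∏ x, ∑ ψ, z ψ * ψ x` that has type `a`. It is an
average of products of the kind in `norm_prod_le`, obtained by multiplying each `z ψ` by roots of
unity of order `#G + 1`; this order exceeds every multiplicity, so the average isolates exactly one
type. -/
lemma coeff_bound (a : AddChar G ℂ → ℕ) (ha : ∀ ψ, a ψ ≤ Fintype.card G)
    (z : AddChar G ℂ → ℝ) (hz : ∑ ψ, z ψ ^ 2 = 1) :
    ‖∑ g : G → AddChar G ℂ, if cnt g = a then ∏ x, ((z (g x) : ℂ) * g x x) else 0‖ ≤ 1 := by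
  set L := Fintype.card G + 1 with hL
  let e : AddChar (ZMod L) ℂ := ZMod.stdAddChar
  let B : (AddChar G ℂ → ZMod L) → ℂ := fun u =>
    (∏ ψ, e (u ψ * -(a ψ : ZMod L))) * ∏ x : G, ∑ ψ, ((z ψ : ℂ) * e (u ψ)) * ψ x
  have hB : ∀ u, ‖B u‖ ≤ 1 := by
    intro u
    have h1 : ‖∏ ψ, e (u ψ * -(a ψ : ZMod L))‖ = 1 := by
      rw [norm_prod]; exact Finset.prod_eq_one fun ψ _ => e.norm_apply _
    rw [norm_mul, h1, one_mul]
    apply norm_prod_le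
    rw [← hz]
    refine Finset.sum_congr rfl fun ψ _ => ?_
    rw [norm_mul, e.norm_apply, mul_one, Complex.norm_real, Real.norm_eq_abs, sq_abs]
  have hsum : ∑ u, B u = (L : ℂ) ^ Fintype.card (AddChar G ℂ) *
      ∑ g : G → AddChar G ℂ, if cnt g = a then ∏ x, ((z (g x) : ℂ) * g x x) else 0 := by
    have h1 : ∀ u, B u = ∑ g : G → AddChar G ℂ, (∏ x, ((z (g x) : ℂ) * g x x)) *
        ∏ ψ, e (u ψ * ((cnt g ψ : ZMod L) - (a ψ : ZMod L))) := by
      intro u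
      simp only [B]
      rw [Finset.prod_univ_sum, Fintype.piFinset_univ, Finset.mul_sum]
      refine Finset.sum_congr rfl fun g _ => ?_
      have h2 : ∀ ψ, e (u ψ * ((cnt g ψ : ZMod L) - (a ψ : ZMod L)))
          = e (u ψ * -(a ψ : ZMod L)) * e (u ψ) ^ cnt g ψ := by
        intro ψ
        rw [← AddChar.map_nsmul_eq_pow, ← AddChar.map_add_eq_mul]
        congr 1
        rw [nsmul_eq_mul]; ring
      rw [Finset.prod_congr rfl fun ψ _ => h2 ψ]
      simp only [Finset.prod_mul_distrib]
      rw [← prod_comp_cnt g (fun ψ => e (u ψ))]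
      ring
    rw [Finset.sum_congr rfl fun u _ => h1 u, Finset.sum_comm, Finset.mul_sum]
    refine Finset.sum_congr rfl fun g _ => ?_
    rw [← Finset.mul_sum]
    have h3 := (Finset.prod_univ_sum (fun _ : AddChar G ℂ => (univ : Finset (ZMod L)))
      (fun ψ v => e (v * ((cnt g ψ : ZMod L) - (a ψ : ZMod L))))).symm
    rw [Fintype.piFinset_univ] at h3
    rw [h3]
    simp only [AddChar.sum_mulShift _ (ZMod.isPrimitive_stdAddChar L), e]
    split_ifs with hg
    · have : ∀ ψ, (cnt g ψ : ZMod L) - (a ψ : ZMod L) = 0 := by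
        intro ψ; rw [hg, sub_self]
      simp only [this, if_true, ZMod.card]
      simp [mul_comm]
    · obtain ⟨ψ, hψ⟩ := Function.ne_iff.1 hg
      rw [mul_zero, Finset.prod_eq_zero (Finset.mem_univ ψ), mul_zero]
      rw [if_neg, Nat.cast_zero]
      rw [sub_eq_zero]
      intro hcon
      apply hψ
      have h4 := (ZMod.natCast_eq_natCast_iff' _ _ _).1 hcon
      have h5 := cnt_le g ψ
      have h6 := ha ψ
      rwa [Nat.mod_eq_of_lt (by omega), Nat.mod_eq_of_lt (by omega)] at h4
  have hle : ‖∑ u, B u‖ ≤ (L : ℝ) ^ Fintype.card (AddChar G ℂ) := by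
    refine (norm_sum_le _ _).trans ((Finset.sum_le_sum fun u _ => hB u).trans ?_)
    simp [ZMod.card]
  rw [hsum, norm_mul, norm_pow, Complex.norm_natCast] at hle
  have hpos : (0 : ℝ) < (L : ℝ) ^ Fintype.card (AddChar G ℂ) := by positivity
  exact (mul_le_iff_le_one_right hpos).1 hle

/-- A Hadamard-type bound in terms of multiplicities only: `coeff_bound` with the weights `z ψ =
√(cnt χ ψ / n)`. -/
lemma hadamard {ι : Type} [Fintype ι] (hι : Fintype.card ι = Fintype.card G)
    (χ : ι → AddChar G ℂ) :
    |phi χ| * (Fintype.card G).factorial * ∏ ψ, √((cnt χ ψ : ℝ) / Fintype.card G) ^ cnt χ ψ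
      ≤ ∏ ψ, ((cnt χ ψ).factorial : ℝ) := by
  have hn : (0 : ℝ) < Fintype.card G := by exact_mod_cast Fintype.card_pos
  set z : AddChar G ℂ → ℝ := fun ψ => √((cnt χ ψ : ℝ) / Fintype.card G) with hz
  have h1 : ∑ ψ, z ψ ^ 2 = 1 := by
    have : ∀ ψ, z ψ ^ 2 = (cnt χ ψ : ℝ) / Fintype.card G := fun ψ => Real.sq_sqrt (by positivity)
    rw [Finset.sum_congr rfl fun ψ _ => this ψ, ← Finset.sum_div, ← Nat.cast_sum, sum_cnt, hι,
      div_self hn.ne']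
  have h2 := coeff_bound (cnt χ) (fun ψ => (cnt_le χ ψ).trans_eq hι) z h1
  have h3 : (∑ g : G → AddChar G ℂ, if cnt g = cnt χ then ∏ x, ((z (g x) : ℂ) * g x x) else 0)
      = (∏ ψ, (z ψ : ℂ) ^ cnt χ ψ) *
        ∑ g : G → AddChar G ℂ, if cnt g = cnt χ then ∏ x, g x x else 0 := by
    rw [Finset.mul_sum]
    refine Finset.sum_congr rfl fun g _ => ?_
    split_ifs with h
    · rw [Finset.prod_mul_distrib, prod_comp_cnt g (fun ψ => (z ψ : ℂ)), h]
    · simp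
  have h4 : ∑ x : ι ↪ G, ∏ i, χ i (x i) = (∏ ψ, ((cnt χ ψ).factorial : ℂ)) *
      ∑ g : G → AddChar G ℂ, if cnt g = cnt χ then ∏ x, g x x else 0 := by
    have h5 : ∑ x : ι ↪ G, ∏ i, χ i (x i) = ∑ σ : ι ≃ G, ∏ x, (χ ∘ σ.symm) x x := by
      refine (Fintype.sum_bijective (fun σ : ι ≃ G => σ.toEmbedding) ?_ _ _ ?_).symm
      · refine ⟨Equiv.toEmbedding_injective, fun x => ?_⟩
        exact ⟨Equiv.ofBijective x ((Fintype.bijective_iff_injective_and_card x).2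
          ⟨x.injective, hι⟩), by ext; rfl⟩
      · intro σ
        exact (Fintype.prod_equiv σ _ _ fun i => by simp).symm
    rw [h5, ← Finset.sum_fiberwise' univ (fun σ : ι ≃ G => χ ∘ σ.symm) (fun g => ∏ x, g x x),
      Finset.mul_sum]
    refine Finset.sum_congr rfl fun g _ => ?_
    rw [Finset.sum_const, card_fiber_equiv]
    split_ifs
    · rw [nsmul_eq_mul]; push_cast; rfl
    · simp
  set Q := ∑ g : G → AddChar G ℂ, if cnt g = cnt χ then ∏ x, g x x else 0 with hQ
  rw [h3, norm_mul, norm_prod] at h2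
  have h6 : |phi χ| * (Fintype.card G).factorial = (∏ ψ, ((cnt χ ψ).factorial : ℝ)) * ‖Q‖ := by
    rw [← Real.norm_eq_abs, ← Complex.norm_real, ofReal_phi, cphi, h4, hι, Nat.descFactorial_self,
      norm_div, norm_mul, norm_prod]
    simp only [Complex.norm_natCast]
    have : ((Fintype.card G).factorial : ℝ) ≠ 0 := by positivity
    field_simp
  have h7 : ∏ ψ, ‖(z ψ : ℂ) ^ cnt χ ψ‖ = ∏ ψ, z ψ ^ cnt χ ψ := by
    refine Finset.prod_congr rfl fun ψ _ => ?_
    rw [norm_pow, Complex.norm_real, Real.norm_of_nonneg (Real.sqrt_nonneg _)]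
  rw [h7] at h2
  rw [h6, mul_assoc]
  refine mul_le_of_le_one_right (by positivity) ?_
  rw [mul_comm]; exact h2

end Fourier
/-! ### Moments over nontrivial characters -/

section Fourier

variable {G : Type} [AddCommGroup G] [Fintype G]

/-- Indicator that `ψ` is nontrivial. -/
noncomputable def nz (ψ : AddChar G ℂ) : ℝ := if ψ = 0 then 0 else 1

/-- Indicator that all entries of `χ` are nontrivial, as a real weight. -/
noncomputable def wt {ι : Type} [Fintype ι] (χ : ι → AddChar G ℂ) : ℝ := ∏ i, nz (χ i)

lemma nz_nonneg (ψ : AddChar G ℂ) : 0 ≤ nz ψ := by unfold nz; split_ifs <;> norm_num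

lemma wt_nonneg {ι : Type} [Fintype ι] (χ : ι → AddChar G ℂ) : 0 ≤ wt χ :=
  Finset.prod_nonneg fun _ _ => nz_nonneg _

variable (G) in
/-- Second moment of the coefficients over `m`-tuples of nontrivial characters. -/
noncomputable def A (m : ℕ) : ℝ := ∑ χ : Fin m → AddChar G ℂ, wt χ * phi χ ^ 2

variable (G) in
/-- Third moment of the coefficients over `m`-tuples of nontrivial characters. -/
noncomputable def S (m : ℕ) : ℝ := ∑ χ : Fin m → AddChar G ℂ, wt χ * phi χ ^ 3

lemma A_nonneg (m : ℕ) : 0 ≤ A G m :=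
  Finset.sum_nonneg fun χ _ => mul_nonneg (wt_nonneg χ) (sq_nonneg _)

lemma sum_insertNth {m : ℕ} {M : Type} [AddCommMonoid M] (i : Fin (m + 1))
    (F : (Fin (m + 1) → AddChar G ℂ) → M) :
    ∑ η, F η = ∑ s : AddChar G ℂ, ∑ χ : Fin m → AddChar G ℂ, F (i.insertNth s χ) := by
  rw [← (Fin.insertNthEquiv (fun _ => AddChar G ℂ) i).sum_comp, Fintype.sum_prod_type]
  rfl

lemma sum_cons {m : ℕ} {M : Type} [AddCommMonoid M]
    (F : (Fin (m + 1) → AddChar G ℂ) → M) :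
    ∑ η, F η = ∑ s : AddChar G ℂ, ∑ χ : Fin m → AddChar G ℂ, F (Fin.cons s χ) := by
  rw [← (Fin.consEquiv (fun _ => AddChar G ℂ)).sum_comp, Fintype.sum_prod_type]
  rfl

lemma wt_insertNth {m : ℕ} (i : Fin (m + 1)) (s : AddChar G ℂ) (χ : Fin m → AddChar G ℂ) :
    wt (i.insertNth s χ : Fin (m + 1) → AddChar G ℂ) = nz s * wt χ := by
  unfold wt
  rw [Fin.prod_univ_succAbove _ i]
  simp

lemma wt_cons {m : ℕ} (s : AddChar G ℂ) (χ : Fin m → AddChar G ℂ) :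
    wt (Fin.cons s χ : Fin (m + 1) → AddChar G ℂ) = nz s * wt χ := by
  unfold wt
  rw [Fin.prod_univ_succ]
  simp

lemma update_insertNth {m : ℕ} (i : Fin (m + 1)) (s t : AddChar G ℂ) (χ : Fin m → AddChar G ℂ) :
    Function.update (i.insertNth s χ : Fin (m + 1) → AddChar G ℂ) i t = i.insertNth t χ := by
  simp

lemma phi_insertNth_zero {m : ℕ} (hm : m < Fintype.card G) (i : Fin (m + 1))
    (χ : Fin m → AddChar G ℂ) :
    phi (i.insertNth 0 χ : Fin (m + 1) → AddChar G ℂ) = phi χ := by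
  rw [phi_insertNth, phi_cons_zero hm]

lemma phi_cons_insertNth_zero {m : ℕ} (hm : m + 1 < Fintype.card G) (i : Fin (m + 1))
    (t : AddChar G ℂ) (χ : Fin m → AddChar G ℂ) :
    phi (Fin.cons t (i.insertNth 0 χ : Fin (m + 1) → AddChar G ℂ) : Fin (m + 2) → AddChar G ℂ)
      = phi (i.insertNth t χ : Fin (m + 1) → AddChar G ℂ) := by
  have : (Fin.cons t (i.insertNth 0 χ : Fin (m + 1) → AddChar G ℂ) : Fin (m + 2) → AddChar G ℂ)
      = i.succ.insertNth 0 (Fin.cons t χ : Fin (m + 1) → AddChar G ℂ) := by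
    rw [Fin.insertNth_succ_cons]
  rw [this, phi_insertNth_zero hm, phi_insertNth]

/-- An exact recursion for the second moment. One factor `phi` is expanded by `phi_cons`; after the
substitution `t = η i + r`, the inner sum over `r` is evaluated by `sum_phi_split`, the only
corrections being the trivial values `r = 0` and `r = t`. -/
lemma A_rec {m : ℕ} (hm : m + 1 < Fintype.card G) :
    ((Fintype.card G : ℝ) - (m + 1)) * A G (m + 2) = (m + 1) * (2 * A G (m + 1) + A G m) := by
  have h1 : ((Fintype.card G : ℝ) - (m + 1)) * A G (m + 2)
      = ∑ i : Fin (m + 1), - ∑ r : AddChar G ℂ, ∑ η : Fin (m + 1) → AddChar G ℂ,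
        nz r * wt η * phi (Fin.cons r η : Fin (m + 2) → AddChar G ℂ)
          * phi (Function.update η i (η i + r)) := by
    rw [Finset.sum_neg_distrib, Finset.sum_comm, A, sum_cons, Finset.mul_sum,
      ← Finset.sum_neg_distrib]
    refine Finset.sum_congr rfl fun r _ => ?_
    rw [Finset.sum_comm, Finset.mul_sum, ← Finset.sum_neg_distrib]
    refine Finset.sum_congr rfl fun η _ => ?_
    rw [wt_cons, ← Finset.mul_sum]
    by_cases hr : r = 0
    · simp [nz, hr]
    · have h := phi_cons (m := m + 1) hm r η
      rw [if_neg hr] at h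
      push_cast at h
      linear_combination (nz r * wt η * phi (Fin.cons r η : Fin (m + 2) → AddChar G ℂ)) * h
  have h2 : ∀ i : Fin (m + 1), - ∑ r : AddChar G ℂ, ∑ η : Fin (m + 1) → AddChar G ℂ,
        nz r * wt η * phi (Fin.cons r η : Fin (m + 2) → AddChar G ℂ)
          * phi (Function.update η i (η i + r)) = 2 * A G (m + 1) + A G m := by
    intro i
    -- substitute `t = s + r`
    have h3 : ∑ r : AddChar G ℂ, ∑ η : Fin (m + 1) → AddChar G ℂ,
        nz r * wt η * phi (Fin.cons r η : Fin (m + 2) → AddChar G ℂ)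
          * phi (Function.update η i (η i + r))
        = ∑ t : AddChar G ℂ, ∑ χ : Fin m → AddChar G ℂ,
          wt χ * phi (i.insertNth t χ : Fin (m + 1) → AddChar G ℂ) *
          ∑ r : AddChar G ℂ, nz r * nz (t - r) *
            phi (Fin.cons r (i.insertNth (t - r) χ : Fin (m + 1) → AddChar G ℂ) :
              Fin (m + 2) → AddChar G ℂ) := by
      simp only [Finset.mul_sum]
      have h4 : ∀ r : AddChar G ℂ, ∑ η : Fin (m + 1) → AddChar G ℂ,
          nz r * wt η * phi (Fin.cons r η : Fin (m + 2) → AddChar G ℂ)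
            * phi (Function.update η i (η i + r))
          = ∑ t : AddChar G ℂ, ∑ χ : Fin m → AddChar G ℂ,
            wt χ * phi (i.insertNth t χ : Fin (m + 1) → AddChar G ℂ) *
            (nz r * nz (t - r) *
            phi (Fin.cons r (i.insertNth (t - r) χ : Fin (m + 1) → AddChar G ℂ) :
              Fin (m + 2) → AddChar G ℂ)) := by
        intro r
        rw [sum_insertNth i]
        refine Fintype.sum_equiv (Equiv.addRight r) _ _ fun s => ?_
        refine Finset.sum_congr rfl fun χ _ => ?_
        rw [update_insertNth, wt_insertNth, Fin.insertNth_apply_same, Equiv.coe_addRight,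
          add_sub_cancel_right]
        ring
      rw [Finset.sum_congr rfl fun r _ => h4 r, Finset.sum_comm]
      refine Finset.sum_congr rfl fun t _ => ?_
      rw [Finset.sum_comm]
    have h5 : ∀ (t : AddChar G ℂ) (χ : Fin m → AddChar G ℂ),
        ∑ r : AddChar G ℂ, nz r * nz (t - r) *
            phi (Fin.cons r (i.insertNth (t - r) χ : Fin (m + 1) → AddChar G ℂ) :
              Fin (m + 2) → AddChar G ℂ)
          = - (2 * nz t + if t = 0 then 1 else 0) *
            phi (i.insertNth t χ : Fin (m + 1) → AddChar G ℂ) := by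
      intro t χ
      set f : AddChar G ℂ → ℝ := fun r =>
        phi (Fin.cons r (i.insertNth (t - r) χ : Fin (m + 1) → AddChar G ℂ) :
              Fin (m + 2) → AddChar G ℂ) with hf
      have hf0 : ∑ r, f r = 0 := sum_phi_split i t χ
      have hfa : f 0 = phi (i.insertNth t χ : Fin (m + 1) → AddChar G ℂ) := by
        rw [hf]; simp only [sub_zero]
        rw [phi_cons_zero hm]
      have hfb : f t = phi (i.insertNth t χ : Fin (m + 1) → AddChar G ℂ) := by
        rw [hf]; simp only [sub_self]
        rw [phi_cons_insertNth_zero hm]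
      have h6 : ∀ r, nz r * nz (t - r) * f r = f r - (if r = 0 then f r else 0)
          - (if r = t then f r else 0) + if r = 0 then (if t = 0 then f r else 0) else 0 := by
        intro r
        unfold nz
        by_cases h1 : r = 0
        · by_cases h2 : t = 0
          · simp [h1, h2]
          · simp [h1, h2, Ne.symm h2]
        · by_cases h2 : r = t
          · subst h2
            simp [h1]
          · have : t - r ≠ 0 := sub_ne_zero.2 (Ne.symm h2)
            simp [h1, h2, this]
      rw [Finset.sum_congr rfl fun r _ => h6 r, Finset.sum_add_distrib, Finset.sum_sub_distrib,
        Finset.sum_sub_distrib, hf0]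
      simp only [Finset.sum_ite_eq', Finset.mem_univ, if_true]
      rw [hfa, hfb]
      unfold nz
      split_ifs <;> ring
    rw [h3]
    simp only [h5]
    have h7 : A G (m + 1) = ∑ t : AddChar G ℂ, ∑ χ : Fin m → AddChar G ℂ,
        nz t * wt χ * phi (i.insertNth t χ : Fin (m + 1) → AddChar G ℂ) ^ 2 := by
      rw [A, sum_insertNth i]
      simp only [wt_insertNth]
    have h8 : A G m = ∑ t : AddChar G ℂ, ∑ χ : Fin m → AddChar G ℂ,
        (if t = 0 then 1 else 0) * wt χ *
          phi (i.insertNth t χ : Fin (m + 1) → AddChar G ℂ) ^ 2 := by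
      rw [Finset.sum_eq_single 0]
      · simp only [phi_insertNth_zero (Nat.lt_of_succ_lt hm), if_true, one_mul, A]
      · intro t _ ht
        simp [ht]
      · simp
    rw [h7, h8]
    simp only [Finset.mul_sum, ← Finset.sum_add_distrib, ← Finset.sum_neg_distrib]
    refine Finset.sum_congr rfl fun t _ => Finset.sum_congr rfl fun χ _ => ?_
    ring
  rw [h1, Finset.sum_congr rfl fun i _ => h2 i, Finset.sum_const, Finset.card_univ,
    Fintype.card_fin, nsmul_eq_mul]
  push_cast
  ring

end Fourier
/-! ### Bounds for the second moment and for single coefficients -/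

section Fourier

variable {G : Type} [AddCommGroup G] [Fintype G]

lemma phi_fin_zero (χ : Fin 0 → AddChar G ℂ) : phi χ = 1 := by
  simp [phi, cphi]

lemma A_zero : A G 0 = 1 := by
  simp [A, wt, phi_fin_zero]

lemma S_zero : S G 0 = 1 := by
  simp [S, wt, phi_fin_zero]

lemma phi_fin_one {r : AddChar G ℂ} (hr : r ≠ 0) (χ : Fin 0 → AddChar G ℂ) :
    phi (Fin.cons r χ : Fin 1 → AddChar G ℂ) = 0 := by
  have h := phi_cons (m := 0) Fintype.card_pos r χ
  have hn : (Fintype.card G : ℝ) ≠ 0 := by exact_mod_cast Fintype.card_ne_zero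
  simpa [hr, hn] using h

lemma A_one : A G 1 = 0 := by
  rw [A, sum_cons]
  refine Finset.sum_eq_zero fun r _ => Finset.sum_eq_zero fun χ _ => ?_
  by_cases hr : r = 0
  · simp [wt_cons, nz, hr]
  · rw [phi_fin_one hr]; simp

lemma S_one : S G 1 = 0 := by
  rw [S, sum_cons]
  refine Finset.sum_eq_zero fun r _ => Finset.sum_eq_zero fun χ _ => ?_
  by_cases hr : r = 0
  · simp [wt_cons, nz, hr]
  · rw [phi_fin_one hr]; simp

/-- Induction along `A_rec`, with a free parameter `p` in place of `√(m / n)` so that the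
hypothesis passes to smaller `m`. -/
lemma A_le_pow (p : ℝ) (hp : 0 ≤ p) (hp1 : p ≤ 1) : ∀ m : ℕ, 2 * m ≤ Fintype.card G →
    (m : ℝ) ≤ p ^ 2 * Fintype.card G → A G m ≤ (5 * p) ^ m := by
  intro m
  induction m using Nat.twoStepInduction with
  | zero => intro _ _; simp [A_zero]
  | one => intro _ _; rw [A_one]; positivity
  | more m ih0 ih1 =>
    intro h2 hm
    push_cast at hm
    have h0 := ih0 (by omega) (by linarith)
    have h1 := ih1 (by omega) (by push_cast; linarith)
    have hr := A_rec (G := G) (m := m) (by omega)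
    have hn : (0 : ℝ) < Fintype.card G := by exact_mod_cast Fintype.card_pos
    have h2' : 2 * ((m : ℝ) + 2) ≤ Fintype.card G := by exact_mod_cast h2
    have hA := A_nonneg (G := G) (m + 2)
    set n : ℝ := (Fintype.card G : ℝ)
    have e1 : n / 2 * A G (m + 2) ≤ (n - (m + 1)) * A G (m + 2) :=
      mul_le_mul_of_nonneg_right (by linarith) hA
    have e2 : 2 * A G (m + 1) + A G m ≤ 2 * (5 * p) ^ (m + 1) + (5 * p) ^ m := by linarith
    have e3 : ((m : ℝ) + 1) * (2 * A G (m + 1) + A G m)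
        ≤ (p ^ 2 * n) * (2 * (5 * p) ^ (m + 1) + (5 * p) ^ m) :=
      mul_le_mul (by linarith) e2 (by have := A_nonneg (G := G) m;
                                      have := A_nonneg (G := G) (m + 1); positivity) (by positivity)
    have e4 : n / 2 * A G (m + 2) ≤ n / 2 * (2 * p ^ 2 * (2 * (5 * p) ^ (m + 1) + (5 * p) ^ m)) := by
      linarith
    have e5 := le_of_mul_le_mul_left e4 (by positivity)
    refine e5.trans ?_
    have e6 : 2 * p ^ 2 * (2 * (5 * p) ^ (m + 1) + (5 * p) ^ m)
        = (5 * p) ^ m * (p ^ 2 * (20 * p + 2)) := by ring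
    rw [e6, pow_add]
    refine mul_le_mul_of_nonneg_left ?_ (by positivity)
    nlinarith [sq_nonneg p]

/-- The square root of `∏ a, (cnt f a) ^ (cnt f a)`. -/
noncomputable def Es {ι X : Type} [Fintype ι] [Fintype X] (f : ι → X) : ℝ :=
  ∏ a, √(cnt f a : ℝ) ^ cnt f a

lemma Es_nonneg {ι X : Type} [Fintype ι] [Fintype X] (f : ι → X) : 0 ≤ Es f := by
  unfold Es; positivity

lemma Es_pos {ι X : Type} [Fintype ι] [Fintype X] (f : ι → X) : 0 < Es f := by
  refine Finset.prod_pos fun a _ => ?_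
  rcases Nat.eq_zero_or_pos (cnt f a) with h | h
  · simp [h]
  · positivity

lemma Es_le {ι X : Type} [Fintype ι] [Fintype X] (f : ι → X) :
    Es f ≤ √(Fintype.card ι : ℝ) ^ Fintype.card ι := by
  unfold Es
  rw [← sum_cnt f, ← Finset.prod_pow_eq_pow_sum]
  refine Finset.prod_le_prod (fun _ _ => by positivity) fun a _ => ?_
  gcongr
  rw [sum_cnt]
  exact cnt_le f a

lemma cnt_elim {α β X : Type} [Fintype α] [Fintype β] (f : α → X) (g : β → X) (a : X) :
    cnt (Sum.elim f g) a = cnt f a + cnt g a := by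
  unfold cnt
  rw [← Finset.card_disjSum]
  congr 1
  ext (i | i) <;> simp

lemma cnt_const {β X : Type} [Fintype β] (b a : X) :
    cnt (fun _ : β => b) a = if a = b then Fintype.card β else 0 := by
  unfold cnt
  split_ifs with h
  · simp [h]
  · simp [Ne.symm h]

lemma cnt_zero_of_wt {ι : Type} [Fintype ι] {χ : ι → AddChar G ℂ} (h : wt χ ≠ 0) :
    cnt χ 0 = 0 := by
  unfold cnt
  rw [Finset.card_eq_zero, Finset.filter_eq_empty_iff]
  intro i _ hi
  exact h (Finset.prod_eq_zero (Finset.mem_univ i) (by simp [nz, hi]))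

lemma wt_eq_one {ι : Type} [Fintype ι] {χ : ι → AddChar G ℂ} (h : wt χ ≠ 0) : wt χ = 1 := by
  refine Finset.prod_eq_one fun i _ => ?_
  have : nz (χ i) ≠ 0 := fun h' => h (Finset.prod_eq_zero (Finset.mem_univ i) h')
  unfold nz at *
  split_ifs at * <;> simp_all

lemma factorial_le_sqrt (a : ℕ) : (a.factorial : ℝ) ≤ √(a : ℝ) ^ a * √(a : ℝ) ^ a := by
  rw [← mul_pow, Real.mul_self_sqrt (by positivity)]
  exact_mod_cast Nat.factorial_le_pow a

/-- Absorbs the factor contributed by `n - m` trivial characters in `hadamard` into `2 ^ m`. -/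
lemma four_pow_bound {m n : ℕ} (h : 2 * m ≤ n) (hn : 0 < n) :
    (1 : ℝ) ≤ 2 ^ m * √(((n - m : ℕ) : ℝ) / n) ^ (n - m) := by
  have hk : 0 < n - m := by omega
  set k := n - m with hkd
  have hnk : (n : ℝ) = k + m := by rw [hkd]; push_cast [show m ≤ n by omega]; ring
  have hk' : (0 : ℝ) < k := by exact_mod_cast hk
  have h1 : ((n : ℝ) / k) ^ k ≤ 4 ^ m := by
    have : (n : ℝ) / k ≤ Real.exp (m / k) := by
      rw [hnk, add_div, div_self hk'.ne', add_comm]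
      exact Real.add_one_le_exp _
    calc ((n : ℝ) / k) ^ k ≤ Real.exp (m / k) ^ k := by gcongr
      _ = Real.exp 1 ^ m := by
        rw [← Real.exp_nat_mul, ← Real.exp_nat_mul]; congr 1; field_simp
      _ ≤ 4 ^ m := by
        gcongr
        linarith [Real.exp_one_lt_d9]
  have hn' : (0 : ℝ) < n := by exact_mod_cast hn
  have h2 : (1 : ℝ) ≤ 4 ^ m * ((k : ℝ) / n) ^ k := by
    have : ((n : ℝ) / k) ^ k * ((k : ℝ) / n) ^ k = 1 := by
      rw [← mul_pow]; rw [show (n : ℝ) / k * (k / n) = 1 by field_simp]; simp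
    rw [← this]
    gcongr
  have h3 : (2 ^ m * √((k : ℝ) / n) ^ k) ^ 2 = 4 ^ m * ((k : ℝ) / n) ^ k := by
    rw [mul_pow, ← pow_mul, ← pow_mul, mul_comm m, mul_comm k, pow_mul, pow_mul,
      Real.sq_sqrt (by positivity)]
    norm_num
  rw [← h3] at h2
  exact (one_le_sq_iff₀ (by positivity)).1 h2

/-- The bound `hadamard` after padding `χ` with trivial characters to length `n`. -/
lemma phi_le {m : ℕ} (h2 : 2 * m ≤ Fintype.card G) (χ : Fin m → AddChar G ℂ) (hw : wt χ ≠ 0) :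
    |phi χ| ≤ 4 ^ m * Es χ / √(Fintype.card G : ℝ) ^ m := by
  have hn0 : 0 < Fintype.card G := Fintype.card_pos
  set n := Fintype.card G with hn
  have hcnt : ∀ ψ, cnt (Sum.elim χ (fun _ : Fin (n - m) => 0)) ψ
      = if ψ = 0 then n - m else cnt χ ψ := by
    intro ψ
    rw [cnt_elim, cnt_const]
    split_ifs with h
    · rw [h, cnt_zero_of_wt hw]; simp
    · simp
  have hprod : ∀ F : ℕ → ℝ, F 0 = 1 → ∏ ψ, F (cnt (Sum.elim χ (fun _ : Fin (n - m) => 0)) ψ)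
      = F (n - m) * ∏ ψ, F (cnt χ ψ) := by
    intro F hF
    rw [Fintype.prod_eq_mul_prod_compl (0 : AddChar G ℂ),
      Fintype.prod_eq_mul_prod_compl (0 : AddChar G ℂ) (fun ψ => F (cnt χ ψ)),
      cnt_zero_of_wt hw, hF, one_mul, hcnt, if_pos rfl]
    congr 1
    refine Finset.prod_congr rfl fun ψ hψ => ?_
    rw [hcnt, if_neg (by simpa using hψ)]
  have hh := hadamard (ι := Fin m ⊕ Fin (n - m)) (by simp; omega)
    (Sum.elim χ (fun _ : Fin (n - m) => 0))
  rw [phi_sum_elim_zero (by simp; omega), hprod (fun a => (a.factorial : ℝ)) (by simp),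
    hprod (fun a => √((a : ℝ) / Fintype.card G) ^ a) (by simp), ← hn] at hh
  have hn' : (0 : ℝ) < n := by exact_mod_cast hn0
  have hsn : 0 < √(n : ℝ) := Real.sqrt_pos.2 hn'
  have e1 : ∏ ψ, √((cnt χ ψ : ℝ) / n) ^ cnt χ ψ = Es χ / √(n : ℝ) ^ m := by
    have : (√(n : ℝ)) ^ m = ∏ ψ, √(n : ℝ) ^ cnt χ ψ := by
      rw [Finset.prod_pow_eq_pow_sum, sum_cnt, Fintype.card_fin]
    rw [this, Es, ← Finset.prod_div_distrib]
    refine Finset.prod_congr rfl fun ψ _ => ?_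
    rw [Real.sqrt_div (by positivity), div_pow]
  have e2 : ∏ ψ, ((cnt χ ψ).factorial : ℝ) ≤ Es χ * Es χ := by
    rw [Es, ← Finset.prod_mul_distrib]
    exact Finset.prod_le_prod (fun _ _ => by positivity) fun ψ _ => factorial_le_sqrt _
  have e3 : ((n - m).factorial : ℝ) * ((n : ℝ) / 2) ^ m ≤ n.factorial := by
    have a1 : (n - m).factorial * n.descFactorial m = n.factorial :=
      Nat.factorial_mul_descFactorial (by omega)
    have a2 : (n + 1 - m) ^ m ≤ n.descFactorial m := Nat.pow_sub_le_descFactorial n m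
    have a3 : ((n : ℝ) / 2) ^ m ≤ ((n + 1 - m : ℕ) : ℝ) ^ m := by
      gcongr
      rw [div_le_iff₀ (by norm_num)]
      exact_mod_cast (by omega : n ≤ (n + 1 - m) * 2)
    rw [← a1]; push_cast
    gcongr
    refine a3.trans ?_
    exact_mod_cast a2
  have e4 := four_pow_bound h2 hn0
  have hE := Es_pos χ
  rw [e1] at hh
  set K : ℝ := √(((n - m : ℕ) : ℝ) / n) ^ (n - m) with hK
  have hK0 : 0 ≤ K := by positivity
  have hf : (0 : ℝ) < (n - m).factorial := by exact_mod_cast Nat.factorial_pos _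
  have e5 : |phi χ| * (((n - m).factorial : ℝ) * ((n : ℝ) / 2) ^ m) * (K * (Es χ / √(n : ℝ) ^ m))
      ≤ (n - m).factorial * (Es χ * Es χ) := by
    refine le_trans ?_ (hh.trans (mul_le_mul_of_nonneg_left e2 hf.le))
    gcongr
  have e6 : (n : ℝ) ^ m = √(n : ℝ) ^ m * √(n : ℝ) ^ m := by
    rw [← mul_pow, Real.mul_self_sqrt hn'.le]
  have e7 : |phi χ| * K * √(n : ℝ) ^ m ≤ 2 ^ m * Es χ := by
    have : 0 < (n - m).factorial * Es χ / 2 ^ m := by positivity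
    refine le_of_mul_le_mul_left ?_ this
    calc _ = |phi χ| * (((n - m).factorial : ℝ) * ((n : ℝ) / 2) ^ m) *
          (K * (Es χ / √(n : ℝ) ^ m)) := by
            rw [div_pow, e6]; field_simp
      _ ≤ _ := e5
      _ = _ := by field_simp
  rw [le_div_iff₀ (by positivity)]
  calc |phi χ| * √(n : ℝ) ^ m = |phi χ| * √(n : ℝ) ^ m * 1 := by ring
    _ ≤ |phi χ| * √(n : ℝ) ^ m * (2 ^ m * K) := by gcongr
    _ = 2 ^ m * (|phi χ| * K * √(n : ℝ) ^ m) := by ring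
    _ ≤ 2 ^ m * (2 ^ m * Es χ) := by gcongr
    _ = 4 ^ m * Es χ := by rw [← mul_assoc, ← mul_pow]; norm_num

lemma phi_le_sqrt {m : ℕ} (h2 : 2 * m ≤ Fintype.card G) (χ : Fin m → AddChar G ℂ)
    (hw : wt χ ≠ 0) : |phi χ| ≤ 4 ^ m * √(m : ℝ) ^ m / √(Fintype.card G : ℝ) ^ m := by
  refine (phi_le h2 χ hw).trans ?_
  have := Es_le χ
  rw [Fintype.card_fin] at this
  gcongr

end Fourier
/-! ### Main part and remainder of the cubic recursion -/

section Fourier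

variable {G : Type} [AddCommGroup G] [Fintype G]

variable (G) in
/-- The small parameter `n ^ (-1/2)`, where `n = #G`. -/
noncomputable def pp : ℝ := (√(Fintype.card G : ℝ))⁻¹

lemma card_pos' : (0 : ℝ) < Fintype.card G := by exact_mod_cast Fintype.card_pos

lemma pp_pos : 0 < pp G := inv_pos.2 (Real.sqrt_pos.2 card_pos')

lemma card_mul_pp : (Fintype.card G : ℝ) * pp G ^ 2 = 1 := by
  unfold pp
  rw [inv_pow, Real.sq_sqrt card_pos'.le, mul_inv_cancel₀ card_pos'.ne']

lemma pp_le_one : pp G ≤ 1 := by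
  have h := card_mul_pp (G := G)
  have h1 : (1 : ℝ) ≤ Fintype.card G := by exact_mod_cast Fintype.card_pos (α := G)
  have h2 := pp_pos (G := G)
  by_contra hc
  push Not at hc
  nlinarith

lemma A_le {m : ℕ} (h2 : 2 * m ≤ Fintype.card G) : A G m ≤ (5 * √(m : ℝ)) ^ m * pp G ^ m := by
  have hn := card_pos' (G := G)
  have h := A_le_pow (G := G) (√(m : ℝ) * pp G) (by have := pp_pos (G := G); positivity) ?_ m h2 ?_
  · rwa [← mul_assoc, mul_pow] at h
  · unfold pp
    rw [← div_eq_mul_inv, ← Real.sqrt_div (by positivity), Real.sqrt_le_one, div_le_one hn]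
    exact_mod_cast (by omega : m ≤ Fintype.card G)
  · rw [mul_pow, Real.sq_sqrt (by positivity), mul_assoc, mul_comm (pp G ^ 2), card_mul_pp, mul_one]

lemma phi_le_pp {m : ℕ} (h2 : 2 * m ≤ Fintype.card G) (χ : Fin m → AddChar G ℂ)
    (hw : wt χ ≠ 0) : |phi χ| ≤ (4 * √(m : ℝ)) ^ m * pp G ^ m := by
  refine (phi_le_sqrt h2 χ hw).trans_eq ?_
  rw [mul_pow, pp, inv_pow, div_eq_mul_inv]

variable (G) in
/-- Absolute third moment of the coefficients over `m`-tuples of nontrivial characters. -/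
noncomputable def Sabs (m : ℕ) : ℝ := ∑ χ : Fin m → AddChar G ℂ, wt χ * |phi χ| ^ 3

lemma abs_S_le (m : ℕ) : |S G m| ≤ Sabs G m := by
  refine (Finset.abs_sum_le_sum_abs _ _).trans_eq ?_
  refine Finset.sum_congr rfl fun χ _ => ?_
  rw [abs_mul, abs_pow, abs_of_nonneg (wt_nonneg χ)]

lemma Sabs_nonneg (m : ℕ) : 0 ≤ Sabs G m :=
  Finset.sum_nonneg fun χ _ => mul_nonneg (wt_nonneg χ) (by positivity)

/-- One factor is bounded pointwise by `phi_le_pp`, the other two by the second moment `A_le`. -/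
lemma Sabs_le {m : ℕ} (h2 : 2 * m ≤ Fintype.card G) :
    Sabs G m ≤ ((4 * √(m : ℝ)) ^ m * (5 * √(m : ℝ)) ^ m) * pp G ^ (2 * m) := by
  have hp := pp_pos (G := G)
  have h1 : Sabs G m ≤ ((4 * √(m : ℝ)) ^ m * pp G ^ m) * A G m := by
    unfold Sabs A
    rw [Finset.mul_sum]
    refine Finset.sum_le_sum fun χ _ => ?_
    by_cases hw : wt χ = 0
    · simp [hw]
    · have := phi_le_pp h2 χ hw
      have hw0 := wt_nonneg χ
      calc wt χ * |phi χ| ^ 3 = |phi χ| * (wt χ * phi χ ^ 2) := by rw [← sq_abs (phi χ)]; ring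
        _ ≤ _ := by gcongr
  refine h1.trans ?_
  calc ((4 * √(m : ℝ)) ^ m * pp G ^ m) * A G m
      ≤ ((4 * √(m : ℝ)) ^ m * pp G ^ m) * ((5 * √(m : ℝ)) ^ m * pp G ^ m) := by
        gcongr; exact A_le h2
    _ = _ := by ring

/-- The cube of a sum agrees with the sum of the cubes up to terms involving two distinct indices.
-/
lemma cube_diag {d : ℕ} (I : Finset (Fin d)) (x : Fin d → ℝ) :
    |(∑ i ∈ I, x i) ^ 3 - ∑ i ∈ I, x i ^ 3|
      ≤ ((d : ℝ) ^ 2 + 1) * ∑ i ∈ I, ∑ j ∈ I, if j ≠ i then |x i| ^ 3 else 0 := by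
  have hd : (I.card : ℝ) ≤ d := by
    have := Finset.card_le_univ I
    rw [Fintype.card_fin] at this; exact_mod_cast this
  have hnn : 0 ≤ ((d : ℝ) ^ 2 + 1) * ∑ i ∈ I, ∑ j ∈ I, if j ≠ i then |x i| ^ 3 else 0 := by
    refine mul_nonneg (by positivity) (Finset.sum_nonneg fun i _ => Finset.sum_nonneg fun j _ => ?_)
    split_ifs <;> positivity
  by_cases hI : I.card ≤ 1
  · rcases Nat.le_one_iff_eq_zero_or_eq_one.1 hI with h | h
    · rw [Finset.card_eq_zero] at h
      subst h; simp
    · obtain ⟨a, rfl⟩ := Finset.card_eq_one.1 h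
      simp
  · push Not at hI
    have h1 : ∑ i ∈ I, |x i| ^ 3 ≤ ∑ i ∈ I, ∑ j ∈ I, if j ≠ i then |x i| ^ 3 else 0 := by
      refine Finset.sum_le_sum fun i hi => ?_
      obtain ⟨j, hj, hji⟩ := Finset.exists_mem_ne hI i
      have := Finset.single_le_sum (f := fun j => if j ≠ i then |x i| ^ 3 else 0)
        (fun k _ => by split_ifs <;> positivity) hj
      simpa [hji] using this
    have h2 : |(∑ i ∈ I, x i) ^ 3| ≤ (d : ℝ) ^ 2 * ∑ i ∈ I, |x i| ^ 3 := by
      rw [abs_pow]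
      have a1 : |∑ i ∈ I, x i| ^ 3 ≤ (∑ i ∈ I, |x i|) ^ 3 := by
        gcongr; exact Finset.abs_sum_le_sum_abs _ _
      have a3 := pow_sum_div_card_le_sum_pow (s := I) (f := fun i => |x i|)
        (fun _ _ => abs_nonneg _) 2
      rw [div_le_iff₀ (by positivity)] at a3
      refine a1.trans (a3.trans ?_)
      rw [mul_comm]
      gcongr
    have h3 : |∑ i ∈ I, x i ^ 3| ≤ ∑ i ∈ I, |x i| ^ 3 := by
      refine (Finset.abs_sum_le_sum_abs _ _).trans_eq ?_
      simp [abs_pow]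
    calc _ ≤ |(∑ i ∈ I, x i) ^ 3| + |∑ i ∈ I, x i ^ 3| := abs_sub _ _
      _ ≤ ((d : ℝ) ^ 2 + 1) * ∑ i ∈ I, |x i| ^ 3 := by linarith
      _ ≤ _ := by gcongr

/-- The main part of the recursion for `phi (Fin.cons r η)`: the indices `i` with `η i + r = 0`, at
which the coordinate becomes trivial and the coefficient is effectively one of an `m`-tuple. -/
noncomputable def Mm {m : ℕ} (r : AddChar G ℂ) (η : Fin (m + 1) → AddChar G ℂ) : ℝ :=
  ∑ i with η i = -r, phi (Function.update η i 0)

/-- The remainder of the recursion for `phi (Fin.cons r η)`: the indices at which the coordinate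
stays nontrivial. -/
noncomputable def Rm {m : ℕ} (r : AddChar G ℂ) (η : Fin (m + 1) → AddChar G ℂ) : ℝ :=
  ∑ i with η i ≠ -r, phi (Function.update η i (η i + r))

lemma phi_cons_Mm_Rm {m : ℕ} (hm : m + 1 < Fintype.card G) {r : AddChar G ℂ} (hr : r ≠ 0)
    (η : Fin (m + 1) → AddChar G ℂ) :
    ((Fintype.card G : ℝ) - (m + 1)) * phi (Fin.cons r η : Fin (m + 2) → AddChar G ℂ)
      = -(Mm r η + Rm r η) := by
  have h := phi_cons (m := m + 1) hm r η
  rw [if_neg hr] at h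
  push_cast at h
  rw [h, zero_mul, zero_sub, ← Finset.sum_filter_add_sum_filter_not univ (fun i => η i = -r)]
  unfold Mm Rm
  congr 2
  refine Finset.sum_congr rfl fun i hi => ?_
  simp only [Finset.mem_filter] at hi
  rw [hi.2, neg_add_cancel]

lemma Rm_le {m : ℕ} (h2 : 2 * (m + 1) ≤ Fintype.card G) (r : AddChar G ℂ)
    (η : Fin (m + 1) → AddChar G ℂ) (hw : wt η ≠ 0) :
    |Rm r η| ≤ (m + 1) * ((4 * √((m + 1 : ℕ) : ℝ)) ^ (m + 1)) * pp G ^ (m + 1) := by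
  have hp := pp_pos (G := G)
  have h1 : ∀ i ∈ (univ : Finset (Fin (m + 1))).filter (fun i => η i ≠ -r),
      |phi (Function.update η i (η i + r))|
        ≤ (4 * √((m + 1 : ℕ) : ℝ)) ^ (m + 1) * pp G ^ (m + 1) := by
    intro i hi
    simp only [Finset.mem_filter, Finset.mem_univ, true_and] at hi
    refine phi_le_pp h2 _ ?_
    unfold wt at hw ⊢
    rw [Finset.prod_ne_zero_iff] at hw ⊢
    intro j _
    by_cases hj : j = i
    · subst hj
      have : η j + r ≠ 0 := fun h => hi (eq_neg_of_add_eq_zero_left h)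
      simp [nz, this]
    · simpa [hj] using hw j (Finset.mem_univ _)
  refine (Finset.abs_sum_le_sum_abs _ _).trans ((Finset.sum_le_sum h1).trans ?_)
  rw [Finset.sum_const, nsmul_eq_mul, mul_assoc]
  gcongr
  have := Finset.card_le_univ ((univ : Finset (Fin (m + 1))).filter (fun i => η i ≠ -r))
  rw [Fintype.card_fin] at this
  exact_mod_cast this

/-- Over pairs `(r, η)` with `η i = -r`, the summand depends only on the other `m` entries of `η`,
and `r` is free among the `n - 1` nontrivial characters. -/
lemma sum_pair {m : ℕ} (hm : m < Fintype.card G) (i : Fin (m + 1)) (F : ℝ → ℝ) :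
    ∑ r : AddChar G ℂ, ∑ η : Fin (m + 1) → AddChar G ℂ,
      nz r * wt η * (if η i = -r then F (phi (Function.update η i 0)) else 0)
      = (Fintype.card G - 1) * ∑ χ : Fin m → AddChar G ℂ, wt χ * F (phi χ) := by
  have h1 : ∀ r : AddChar G ℂ, ∑ η : Fin (m + 1) → AddChar G ℂ,
      nz r * wt η * (if η i = -r then F (phi (Function.update η i 0)) else 0)
      = nz r * ∑ χ : Fin m → AddChar G ℂ, wt χ * F (phi χ) := by
    intro r
    rw [sum_insertNth i, Finset.sum_eq_single (-r)]
    · rw [Finset.mul_sum]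
      refine Finset.sum_congr rfl fun χ _ => ?_
      rw [update_insertNth, wt_insertNth, Fin.insertNth_apply_same, if_pos rfl,
        phi_insertNth_zero hm]
      have : nz r * nz (-r) = nz r := by unfold nz; by_cases h : r = 0 <;> simp [h]
      rw [← mul_assoc (nz r), this, mul_assoc]
    · intro s _ hs
      refine Finset.sum_eq_zero fun χ _ => ?_
      rw [Fin.insertNth_apply_same, if_neg hs, mul_zero]
    · simp
  rw [Finset.sum_congr rfl fun r _ => h1 r, ← Finset.sum_mul]
  congr 1
  have : ∀ r : AddChar G ℂ, nz r = 1 - if r = 0 then 1 else 0 := by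
    intro r; unfold nz; split_ifs <;> simp
  simp [this]

lemma sum_Mm_sq_le {m : ℕ} (hm : m < Fintype.card G) :
    ∑ r : AddChar G ℂ, ∑ η : Fin (m + 1) → AddChar G ℂ, nz r * wt η * Mm r η ^ 2
      ≤ (m + 1) ^ 2 * Fintype.card G * A G m := by
  have h1 : ∀ (r : AddChar G ℂ) (η : Fin (m + 1) → AddChar G ℂ), nz r * wt η * Mm r η ^ 2
      ≤ (m + 1) * ∑ i, nz r * wt η *
        (if η i = -r then (fun y : ℝ => y ^ 2) (phi (Function.update η i 0)) else 0) := by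
    intro r η
    rw [← Finset.mul_sum, ← Finset.sum_filter, mul_left_comm]
    refine mul_le_mul_of_nonneg_left ?_ (mul_nonneg (nz_nonneg r) (wt_nonneg η))
    refine (sq_sum_le_card_mul_sum_sq).trans ?_
    have := Finset.card_le_univ ((univ : Finset (Fin (m + 1))).filter (fun i => η i = -r))
    rw [Fintype.card_fin] at this
    gcongr
    exact_mod_cast this
  refine (Finset.sum_le_sum fun r _ => Finset.sum_le_sum fun η _ => h1 r η).trans ?_
  simp only [← Finset.mul_sum]
  have h2 : ∑ r : AddChar G ℂ, ∑ η : Fin (m + 1) → AddChar G ℂ, ∑ i, nz r * wt η *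
        (if η i = -r then (fun y : ℝ => y ^ 2) (phi (Function.update η i 0)) else 0)
      = (m + 1) * ((Fintype.card G - 1) * A G m) := by
    rw [Finset.sum_congr rfl fun r _ => Finset.sum_comm, Finset.sum_comm]
    rw [Finset.sum_congr rfl fun i _ => sum_pair hm i (fun y => y ^ 2)]
    simp [A]
  simp only [← Finset.mul_sum] at h2
  rw [h2]
  have := A_nonneg (G := G) m
  nlinarith [mul_nonneg (sq_nonneg ((m : ℝ) + 1)) this]

/-- The off-diagonal part: two entries of `η` are forced to equal `-r`, so `r` is determined by the
remaining `m`-tuple up to the choice of an index. This saves a factor `n` over `sum_pair`. -/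
lemma sum_offdiag_le {m : ℕ} (hm : m < Fintype.card G) (i : Fin (m + 1)) :
    ∑ r : AddChar G ℂ, ∑ η : Fin (m + 1) → AddChar G ℂ, nz r * wt η *
      (if η i = -r then ∑ j, (if η j = -r then
        (if j ≠ i then |phi (Function.update η i 0)| ^ 3 else 0) else 0) else 0)
      ≤ m * Sabs G m := by
  have h1 : ∀ r : AddChar G ℂ, ∑ η : Fin (m + 1) → AddChar G ℂ, nz r * wt η *
      (if η i = -r then ∑ j, (if η j = -r then
        (if j ≠ i then |phi (Function.update η i 0)| ^ 3 else 0) else 0) else 0)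
      ≤ ∑ χ : Fin m → AddChar G ℂ, ∑ j, (if r = -χ j then wt χ * |phi χ| ^ 3 else 0) := by
    intro r
    rw [sum_insertNth i, Finset.sum_eq_single (-r)]
    · refine Finset.sum_le_sum fun χ _ => ?_
      rw [update_insertNth, wt_insertNth, Fin.insertNth_apply_same, if_pos rfl,
        phi_insertNth_zero hm, Fin.sum_univ_succAbove _ i]
      simp only [ne_eq, not_true_eq_false, if_false, ite_self, zero_add,
        Fin.insertNth_apply_succAbove, Fin.succAbove_ne, not_false_eq_true, if_true]
      rw [Finset.mul_sum]
      refine Finset.sum_le_sum fun j _ => ?_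
      have e : χ j = -r ↔ r = -χ j := by constructor <;> (intro h; rw [h, neg_neg])
      have e1 : nz r * (nz (-r) * wt χ) ≤ wt χ := by
        have := wt_nonneg χ
        unfold nz; by_cases h : r = 0 <;> simp [h, this]
      simp only [e]
      split_ifs
      · gcongr
      · simp
    · intro s _ hs
      refine Finset.sum_eq_zero fun χ _ => ?_
      rw [Fin.insertNth_apply_same, if_neg hs, mul_zero]
    · simp
  refine (Finset.sum_le_sum fun r _ => h1 r).trans_eq ?_
  rw [Finset.sum_comm, Sabs, Finset.mul_sum]
  refine Finset.sum_congr rfl fun χ _ => ?_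
  rw [Finset.sum_comm]
  simp

/-- To leading order the indices in `Mm` contribute independently to the cube. -/
lemma sum_Mm_cube {m : ℕ} (hm : m < Fintype.card G) :
    |∑ r : AddChar G ℂ, ∑ η : Fin (m + 1) → AddChar G ℂ, nz r * wt η * Mm r η ^ 3
      - (m + 1) * ((Fintype.card G - 1) * S G m)|
      ≤ (((m : ℝ) + 1) ^ 2 + 1) * ((m + 1) * (m * Sabs G m)) := by
  have h2 : (m + 1) * ((Fintype.card G - 1) * S G m)
      = ∑ r : AddChar G ℂ, ∑ η : Fin (m + 1) → AddChar G ℂ,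
        nz r * wt η * ∑ i with η i = -r, phi (Function.update η i 0) ^ 3 := by
    have : ∑ r : AddChar G ℂ, ∑ η : Fin (m + 1) → AddChar G ℂ, ∑ i, nz r * wt η *
        (if η i = -r then (fun y : ℝ => y ^ 3) (phi (Function.update η i 0)) else 0)
      = (m + 1) * ((Fintype.card G - 1) * S G m) := by
      rw [Finset.sum_congr rfl fun r _ => Finset.sum_comm, Finset.sum_comm]
      rw [Finset.sum_congr rfl fun i _ => sum_pair hm i (fun y => y ^ 3)]
      simp [S]
    rw [← this]
    simp only [Finset.sum_filter, Finset.mul_sum]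
  rw [h2, ← Finset.sum_sub_distrib]
  simp only [← Finset.sum_sub_distrib, ← mul_sub]
  have h3 : ∀ (r : AddChar G ℂ) (η : Fin (m + 1) → AddChar G ℂ),
      |nz r * wt η * (Mm r η ^ 3 - ∑ i with η i = -r, phi (Function.update η i 0) ^ 3)|
      ≤ (((m : ℝ) + 1) ^ 2 + 1) * ∑ i, nz r * wt η *
      (if η i = -r then ∑ j, (if η j = -r then
        (if j ≠ i then |phi (Function.update η i 0)| ^ 3 else 0) else 0) else 0) := by
    intro r η
    have hw := mul_nonneg (nz_nonneg r) (wt_nonneg η)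
    rw [abs_mul, abs_of_nonneg hw, ← Finset.mul_sum, mul_left_comm]
    refine mul_le_mul_of_nonneg_left ?_ hw
    have := cube_diag (univ.filter fun i => η i = -r) (fun i => phi (Function.update η i 0))
    push_cast at this
    refine this.trans_eq ?_
    simp only [Finset.sum_filter]
  refine (Finset.abs_sum_le_sum_abs _ _).trans ?_
  refine (Finset.sum_le_sum fun r _ => (Finset.abs_sum_le_sum_abs _ _).trans
    (Finset.sum_le_sum fun η _ => h3 r η)).trans ?_
  rw [Finset.sum_congr rfl fun r _ => (Finset.mul_sum _ _ _).symm, ← Finset.mul_sum]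
  refine mul_le_mul_of_nonneg_left ?_ (by positivity)
  rw [Finset.sum_congr rfl fun r _ => Finset.sum_comm, Finset.sum_comm]
  refine (Finset.sum_le_sum fun i _ => sum_offdiag_le hm i).trans_eq ?_
  simp

end Fourier
/-! ### Limits of the third moments -/

section Fourier

variable {G : Type} [AddCommGroup G] [Fintype G]

/-- Cubing the recursion `phi_cons_Mm_Rm`: the cubes of `(n - m - 1) phi` and `-Mm` differ by a
multiple of `Rm`, which is bounded uniformly by `Rm_le`, while the quadratic cofactor is controlled
by second moments. -/
lemma S_main {m : ℕ} (h2 : 2 * (m + 2) ≤ Fintype.card G) :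
    |((Fintype.card G : ℝ) - (m + 1)) ^ 3 * S G (m + 2)
      + ∑ r : AddChar G ℂ, ∑ η : Fin (m + 1) → AddChar G ℂ, nz r * wt η * Mm r η ^ 3|
    ≤ 2 * ((m + 1) * ((4 * √((m + 1 : ℕ) : ℝ)) ^ (m + 1)) * pp G ^ (m + 1)) *
      ((Fintype.card G : ℝ) ^ 2 * A G (m + 2) + (m + 1) ^ 2 * Fintype.card G * A G m) := by
  have hp := pp_pos (G := G)
  have h2' : 2 * ((m : ℝ) + 2) ≤ Fintype.card G := by exact_mod_cast h2
  set n : ℝ := (Fintype.card G : ℝ) with hn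
  set B : ℝ := (m + 1) * ((4 * √((m + 1 : ℕ) : ℝ)) ^ (m + 1)) * pp G ^ (m + 1) with hB
  have hB0 : 0 ≤ B := by positivity
  have hS : (n - (m + 1)) ^ 3 * S G (m + 2) = ∑ r : AddChar G ℂ,
      ∑ η : Fin (m + 1) → AddChar G ℂ, nz r * wt η *
        ((n - (m + 1)) * phi (Fin.cons r η : Fin (m + 2) → AddChar G ℂ)) ^ 3 := by
    rw [S, sum_cons]
    simp only [Finset.mul_sum, wt_cons]
    refine Finset.sum_congr rfl fun r _ => Finset.sum_congr rfl fun χ _ => ?_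
    ring
  have hA : A G (m + 2) = ∑ r : AddChar G ℂ,
      ∑ η : Fin (m + 1) → AddChar G ℂ, nz r * wt η *
        phi (Fin.cons r η : Fin (m + 2) → AddChar G ℂ) ^ 2 := by
    rw [A, sum_cons]
    simp only [wt_cons]
  have key : ∀ (r : AddChar G ℂ) (η : Fin (m + 1) → AddChar G ℂ),
      |nz r * wt η * ((n - (m + 1)) * phi (Fin.cons r η : Fin (m + 2) → AddChar G ℂ)) ^ 3
        + nz r * wt η * Mm r η ^ 3|
      ≤ 2 * B * (n ^ 2 * (nz r * wt η * phi (Fin.cons r η : Fin (m + 2) → AddChar G ℂ) ^ 2)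
        + nz r * wt η * Mm r η ^ 2) := by
    intro r η
    by_cases hr : r = 0
    · simp [nz, hr]
    by_cases hw : wt η = 0
    · simp [hw]
    have h := phi_cons_Mm_Rm (m := m) (by omega) hr η
    have hR := Rm_le (m := m) (by omega) r η hw
    rw [← hn] at h
    rw [← hB] at hR
    set P := phi (Fin.cons r η : Fin (m + 2) → AddChar G ℂ)
    have hw0 := mul_nonneg (nz_nonneg r) (wt_nonneg η)
    have e1 : nz r * wt η * ((n - (m + 1)) * P) ^ 3 + nz r * wt η * Mm r η ^ 3
        = nz r * wt η * (-Rm r η * (((n - (m + 1)) * P) ^ 2 - (n - (m + 1)) * P * Mm r η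
          + Mm r η ^ 2)) := by
      have : Rm r η = -((n - (m + 1)) * P) - Mm r η := by linarith
      rw [this]; ring
    rw [e1, abs_mul, abs_of_nonneg hw0]
    have e2 : |-Rm r η * (((n - (m + 1)) * P) ^ 2 - (n - (m + 1)) * P * Mm r η + Mm r η ^ 2)|
        ≤ B * (2 * (((n - (m + 1)) * P) ^ 2 + Mm r η ^ 2)) := by
      rw [abs_mul, abs_neg]
      refine mul_le_mul hR ?_ (abs_nonneg _) hB0
      rw [abs_le]
      constructor <;>
        nlinarith [sq_nonneg ((n - (m + 1)) * P - Mm r η), sq_nonneg ((n - (m + 1)) * P + Mm r η)]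
    have e3 : ((n - (m + 1)) * P) ^ 2 ≤ n ^ 2 * P ^ 2 := by
      rw [mul_pow]
      gcongr
      · linarith
      · linarith
    calc _ ≤ nz r * wt η * (B * (2 * (((n - (m + 1)) * P) ^ 2 + Mm r η ^ 2))) := by gcongr
      _ ≤ nz r * wt η * (B * (2 * (n ^ 2 * P ^ 2 + Mm r η ^ 2))) := by gcongr
      _ = _ := by ring
  rw [hS, ← Finset.sum_add_distrib]
  simp only [← Finset.sum_add_distrib]
  refine (Finset.abs_sum_le_sum_abs _ _).trans ?_
  refine (Finset.sum_le_sum fun r _ => (Finset.abs_sum_le_sum_abs _ _).trans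
    (Finset.sum_le_sum fun η _ => key r η)).trans ?_
  have hM := sum_Mm_sq_le (G := G) (m := m) (by omega)
  rw [← hn] at hM
  have : ∑ r : AddChar G ℂ, ∑ η : Fin (m + 1) → AddChar G ℂ,
      2 * B * (n ^ 2 * (nz r * wt η * phi (Fin.cons r η : Fin (m + 2) → AddChar G ℂ) ^ 2)
        + nz r * wt η * Mm r η ^ 2)
      = 2 * B * (n ^ 2 * A G (m + 2)
        + ∑ r : AddChar G ℂ, ∑ η : Fin (m + 1) → AddChar G ℂ, nz r * wt η * Mm r η ^ 2) := by
    rw [hA]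
    simp only [Finset.mul_sum, ← Finset.sum_add_distrib, mul_add]
  rw [this]
  gcongr

/-- The asymptotic recursion `n^(m+2) S_{m+2} = -(m+1) n^m S_m + O(n^(-1/2))`, uniform in `G`. -/
lemma S_rec (m : ℕ) : ∃ K : ℝ, 0 ≤ K ∧ ∀ (G : Type) [AddCommGroup G] [Fintype G],
    2 * (m + 2) ≤ Fintype.card G →
    |(Fintype.card G : ℝ) ^ (m + 2) * S G (m + 2) + (m + 1) * ((Fintype.card G : ℝ) ^ m * S G m)|
      ≤ K * pp G := by
  -- the constants in the error terms
  obtain ⟨b, hb, hb0⟩ : ∃ b : ℝ, b = (m + 1) * ((4 * √((m + 1 : ℕ) : ℝ)) ^ (m + 1)) ∧ 0 ≤ b :=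
    ⟨_, rfl, by positivity⟩
  obtain ⟨s, hs, hs0⟩ : ∃ s : ℝ, s = (4 * √(m : ℝ)) ^ m * (5 * √(m : ℝ)) ^ m ∧ 0 ≤ s :=
    ⟨_, rfl, by positivity⟩
  obtain ⟨a, ha, ha0⟩ : ∃ a : ℝ, a = (5 * √(m : ℝ)) ^ m ∧ 0 ≤ a := ⟨_, rfl, by positivity⟩
  obtain ⟨a', ha', ha0'⟩ : ∃ a : ℝ, a = (5 * √((m + 2 : ℕ) : ℝ)) ^ (m + 2) ∧ 0 ≤ a :=
    ⟨_, rfl, by positivity⟩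
  set d : ℝ := (m : ℝ) + 1 with hd
  have hd0 : 0 < d := by positivity
  have hd1 : 1 ≤ d := by rw [hd]; linarith [(Nat.cast_nonneg m : (0 : ℝ) ≤ m)]
  refine ⟨8 * (2 * b * (a' + d ^ 2 * a) + (d ^ 2 + 1) * (d * (m * s)) + d * ((3 * d + 3 * d ^ 2 + d ^ 3) * s)),
    by positivity, ?_⟩
  intro G _ _ h2
  have h2' : 2 * ((m : ℝ) + 2) ≤ Fintype.card G := by exact_mod_cast h2
  have E1 := S_main (G := G) h2
  have E2 := sum_Mm_cube (G := G) (m := m) (by omega)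
  have E3 := Sabs_le (G := G) (m := m) (by omega)
  have E4 := abs_S_le (G := G) m
  have E5 := A_le (G := G) (m := m) (by omega)
  have E6 := A_le (G := G) (m := m + 2) (by omega)
  have hp := pp_pos (G := G)
  have hp1 := pp_le_one (G := G)
  have hnp := card_mul_pp (G := G)
  rw [← hs] at E3
  rw [← ha] at E5
  rw [← ha'] at E6
  rw [← hb] at E1
  rw [← hd] at E1 E2
  have hSn := Sabs_nonneg (G := G) m
  set n : ℝ := (Fintype.card G : ℝ) with hn
  set p := pp G with hpp
  set W := ∑ r : AddChar G ℂ, ∑ η : Fin (m + 1) → AddChar G ℂ, nz r * wt η * Mm r η ^ 3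
  have hn0 : 0 < n := card_pos'
  have hn1 : 1 ≤ n := by linarith [(Nat.cast_nonneg m : (0 : ℝ) ≤ m)]
  have hdn : d ≤ n / 2 := by rw [hd]; linarith
  -- powers of `n` cancel against powers of `p`
  have hcan : ∀ k : ℕ, n ^ k * p ^ (2 * k) = 1 := by
    intro k; rw [pow_mul, ← mul_pow, hnp, one_pow]
  have F1 : |(n - d) ^ 3 * S G (m + 2) + W| ≤ 2 * b * (a' + d ^ 2 * a) * (n * p ^ (2 * m + 1)) := by
    refine E1.trans ?_
    calc 2 * (b * p ^ (m + 1)) * (n ^ 2 * A G (m + 2) + d ^ 2 * n * A G m)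
        ≤ 2 * (b * p ^ (m + 1)) * (n ^ 2 * (a' * p ^ (m + 2)) + d ^ 2 * n * (a * p ^ m)) := by
          gcongr
      _ = 2 * b * (n * (n * p ^ 2) * p ^ (2 * m + 1)) * a'
          + 2 * b * d ^ 2 * a * (n * p ^ (2 * m + 1)) := by ring
      _ = _ := by rw [hnp]; ring
  have F2 : |W - d * ((n - 1) * S G m)| ≤ (d ^ 2 + 1) * (d * (m * s)) * (n * p ^ (2 * m + 1)) := by
    refine E2.trans ?_
    have : p ^ (2 * m) ≤ n * p ^ (2 * m + 1) := by
      have : n * p ^ (2 * m + 1) * p = p ^ (2 * m) := by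
        calc _ = (n * p ^ 2) * p ^ (2 * m) := by ring
          _ = _ := by rw [hnp, one_mul]
      rw [← this]
      exact mul_le_of_le_one_right (by positivity) hp1
    calc (d ^ 2 + 1) * (d * (m * Sabs G m)) ≤ (d ^ 2 + 1) * (d * (m * (s * p ^ (2 * m)))) := by
          gcongr
      _ ≤ (d ^ 2 + 1) * (d * (m * (s * (n * p ^ (2 * m + 1))))) := by gcongr
      _ = _ := by ring
  have F3 : |d * ((n - 1) * S G m) - d * ((n - d) ^ 3 / n ^ 2 * S G m)|
      ≤ d * ((3 * d + 3 * d ^ 2 + d ^ 3) * s) * (n * p ^ (2 * m + 1)) := by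
    have e1 : d * ((n - 1) * S G m) - d * ((n - d) ^ 3 / n ^ 2 * S G m)
        = d * ((n - 1 - (n - d) ^ 3 / n ^ 2) * S G m) := by ring
    have e2 : |n - 1 - (n - d) ^ 3 / n ^ 2| ≤ 3 * d + 3 * d ^ 2 + d ^ 3 := by
      have : n - 1 - (n - d) ^ 3 / n ^ 2 = (3 * d - 1) - 3 * d ^ 2 / n + d ^ 3 / n ^ 2 := by
        field_simp; ring
      rw [this]
      have f1 : 3 * d ^ 2 / n ≤ 3 * d ^ 2 := div_le_self (by positivity) hn1
      have f2 : d ^ 3 / n ^ 2 ≤ d ^ 3 := div_le_self (by positivity) (one_le_pow₀ hn1)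
      have f3 : 0 ≤ 3 * d ^ 2 / n := by positivity
      have f4 : 0 ≤ d ^ 3 / n ^ 2 := by positivity
      have f5 : 0 ≤ d ^ 3 := by positivity
      have f6 : 0 ≤ 3 * d ^ 2 := by positivity
      rw [abs_le]; constructor <;> linarith
    have e3 : p ^ (2 * m) ≤ n * p ^ (2 * m + 1) := by
      have : n * p ^ (2 * m + 1) * p = p ^ (2 * m) := by
        calc _ = (n * p ^ 2) * p ^ (2 * m) := by ring
          _ = _ := by rw [hnp, one_mul]
      rw [← this]
      exact mul_le_of_le_one_right (by positivity) hp1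
    rw [e1, abs_mul, abs_mul, abs_of_pos hd0]
    calc d * (|n - 1 - (n - d) ^ 3 / n ^ 2| * |S G m|)
        ≤ d * ((3 * d + 3 * d ^ 2 + d ^ 3) * (s * (n * p ^ (2 * m + 1)))) := by
          gcongr
          exact E4.trans (E3.trans (by gcongr))
      _ = _ := by ring
  have hT : (n - d) ^ 3 * (S G (m + 2) + d * S G m / n ^ 2)
      = ((n - d) ^ 3 * S G (m + 2) + W) - (W - d * ((n - 1) * S G m))
        - (d * ((n - 1) * S G m) - d * ((n - d) ^ 3 / n ^ 2 * S G m)) := by ring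
  set K := 2 * b * (a' + d ^ 2 * a) + (d ^ 2 + 1) * (d * (m * s))
    + d * ((3 * d + 3 * d ^ 2 + d ^ 3) * s) with hK
  have hK0 : 0 ≤ K := by positivity
  have F4 : |(n - d) ^ 3 * (S G (m + 2) + d * S G m / n ^ 2)| ≤ K * (n * p ^ (2 * m + 1)) := by
    rw [hT]
    refine (abs_sub _ _).trans ?_
    have := abs_sub ((n - d) ^ 3 * S G (m + 2) + W) (W - d * ((n - 1) * S G m))
    have hKe : K * (n * p ^ (2 * m + 1)) = 2 * b * (a' + d ^ 2 * a) * (n * p ^ (2 * m + 1))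
      + (d ^ 2 + 1) * (d * (m * s)) * (n * p ^ (2 * m + 1))
      + d * ((3 * d + 3 * d ^ 2 + d ^ 3) * s) * (n * p ^ (2 * m + 1)) := by rw [hK]; ring
    rw [hKe]
    exact add_le_add (this.trans (add_le_add F1 F2)) F3
  have F5 : (n / 2) ^ 3 * |S G (m + 2) + d * S G m / n ^ 2| ≤ K * (n * p ^ (2 * m + 1)) := by
    rw [abs_mul, abs_pow, abs_of_pos (by linarith : 0 < n - d)] at F4
    refine le_trans ?_ F4
    gcongr
    linarith
  have F6 : n ^ (m + 2) * S G (m + 2) + d * (n ^ m * S G m)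
      = n ^ (m + 2) * (S G (m + 2) + d * S G m / n ^ 2) := by
    field_simp; ring
  rw [F6, abs_mul, abs_of_pos (by positivity)]
  have F7 : n ^ 3 * (n ^ (m + 2) * |S G (m + 2) + d * S G m / n ^ 2|) ≤ n ^ 3 * (8 * K * p) := by
    calc _ = 8 * n ^ (m + 2) * ((n / 2) ^ 3 * |S G (m + 2) + d * S G m / n ^ 2|) := by ring
      _ ≤ 8 * n ^ (m + 2) * (K * (n * p ^ (2 * m + 1))) := by gcongr
      _ = n ^ 3 * (8 * K * p) * (n ^ m * p ^ (2 * m)) := by ring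
      _ = _ := by rw [hcan, mul_one]
  exact le_of_mul_le_mul_left F7 (by positivity)

/-- The limit of `n ^ m * S G m` as `n = #G → ∞`. -/
noncomputable def ell : ℕ → ℝ
  | 0 => 1
  | 1 => 0
  | m + 2 => -(m + 1) * ell m

/-- Iterates `S_rec`, the constants depending on `m` but not on `G`. -/
lemma S_limit (m : ℕ) : ∃ K : ℝ, 0 ≤ K ∧ ∀ (G : Type) [AddCommGroup G] [Fintype G],
    2 * m ≤ Fintype.card G → |(Fintype.card G : ℝ) ^ m * S G m - ell m| ≤ K * pp G := by
  induction m using Nat.twoStepInduction with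
  | zero => exact ⟨0, le_rfl, fun G _ _ _ => by simp [S_zero, ell]⟩
  | one => exact ⟨0, le_rfl, fun G _ _ _ => by simp [S_one, ell]⟩
  | more m ih0 _ =>
    obtain ⟨K0, hK0, h0⟩ := ih0
    obtain ⟨K, hK, h⟩ := S_rec m
    refine ⟨K + (m + 1) * K0, by positivity, fun G _ _ h2 => ?_⟩
    have e0 := h0 G (by omega)
    have e := h G h2
    have : (Fintype.card G : ℝ) ^ (m + 2) * S G (m + 2) - ell (m + 2)
        = ((Fintype.card G : ℝ) ^ (m + 2) * S G (m + 2)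
          + (m + 1) * ((Fintype.card G : ℝ) ^ m * S G m))
          - (m + 1) * ((Fintype.card G : ℝ) ^ m * S G m - ell m) := by
      rw [ell]; ring
    rw [this]
    refine (abs_sub _ _).trans ?_
    rw [abs_mul, abs_of_pos (by positivity : (0 : ℝ) < m + 1)]
    have : (K + (m + 1) * K0) * pp G = K * pp G + (m + 1) * (K0 * pp G) := by ring
    rw [this]
    gcongr

lemma ell_odd (k : ℕ) : ell (2 * k + 1) = 0 := by
  induction k with
  | zero => simp [ell]
  | succ k ih => rw [show 2 * (k + 1) + 1 = (2 * k + 1) + 2 by ring, ell, ih, mul_zero]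

lemma ell_even (k : ℕ) : ell (2 * k) / (2 * k).factorial = (-(1 / 2)) ^ k / k.factorial := by
  induction k with
  | zero => simp [ell]
  | succ k ih =>
    rw [show 2 * (k + 1) = (2 * k) + 2 by ring, ell, Nat.factorial_succ, Nat.factorial_succ,
      Nat.factorial_succ, pow_succ]
    have h1 : ((2 * k).factorial : ℝ) ≠ 0 := by positivity
    have h2 : (k.factorial : ℝ) ≠ 0 := by positivity
    rw [div_eq_div_iff h1 h2] at ih
    push_cast
    field_simp
    linear_combination (-2 * ((k : ℝ) + 1)) * ih

/-- Only even `m = 2k` contribute, with `ell (2k) / (2k)! = (-1/2)^k / k!`. -/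
lemma hasSum_ell : HasSum (fun m => ell m / m.factorial) (Real.exp (-(1 / 2))) := by
  have h1 : HasSum (fun k => ell (2 * k) / (2 * k).factorial) (Real.exp (-(1 / 2))) := by
    rw [funext ell_even, Real.exp_eq_exp_ℝ]
    exact NormedSpace.expSeries_div_hasSum_exp (-(1 / 2) : ℝ)
  have h2 : HasSum (fun k => ell (2 * k + 1) / (2 * k + 1).factorial) 0 := by
    have : (fun k => ell (2 * k + 1) / (2 * k + 1).factorial) = fun _ => (0 : ℝ) := by
      funext k; rw [ell_odd, zero_div]
    rw [this]
    exact hasSum_zero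
  have h3 := HasSum.even_add_odd (f := fun m => ell m / m.factorial) h1 h2
  rwa [add_zero] at h3

end Fourier
/-! ### Sparse and dense tuples -/

section Fourier

variable {G : Type} [AddCommGroup G] [Fintype G]

lemma wt_eq_ite {ι : Type} [Fintype ι] (χ : ι → AddChar G ℂ) :
    wt χ = if ∀ i, χ i ≠ 0 then 1 else 0 := by
  split_ifs with h
  · exact Finset.prod_eq_one fun i _ => by simp [nz, h i]
  · push Not at h
    obtain ⟨i, hi⟩ := h
    exact Finset.prod_eq_zero (Finset.mem_univ i) (by simp [nz, hi])

/-- The `n`-tuples whose nontrivial entries are exactly those indexed by `J` contribute `S G m`. -/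
lemma sum_supp_eq {n m : ℕ} (hn : Fintype.card G = n) (hm : m ≤ n) (J : Finset (Fin n))
    (hJ : #J = m) :
    ∑ χ : Fin n → AddChar G ℂ, (if (univ.filter fun i => χ i ≠ 0) = J then phi χ ^ 3 else 0)
      = S G m := by
  have hJc : #Jᶜ = n - m := by rw [Finset.card_compl, hJ, Fintype.card_fin]
  set e : Fin m ⊕ Fin (n - m) ≃ Fin n := finSumEquivOfFinset hJ hJc with he
  have he1 : ∀ i, e (Sum.inl i) ∈ J := fun i => by
    rw [he, finSumEquivOfFinset_inl]; exact Finset.orderEmbOfFin_mem _ _ _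
  have he2 : ∀ i, e (Sum.inr i) ∉ J := fun i => by
    rw [he, finSumEquivOfFinset_inr]
    exact Finset.mem_compl.1 (Finset.orderEmbOfFin_mem _ hJc _)
  let T : (Fin m → AddChar G ℂ) × (Fin (n - m) → AddChar G ℂ) ≃ (Fin n → AddChar G ℂ) :=
    (Equiv.sumArrowEquivProdArrow _ _ _).symm.trans (Equiv.arrowCongr e (Equiv.refl _))
  have hT : ∀ p i, T p i = Sum.elim p.1 p.2 (e.symm i) := fun p i => rfl
  have hphi : ∀ p, phi (T p) = phi (Sum.elim p.1 p.2) := by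
    intro p
    rw [← phi_comp e.symm (Sum.elim p.1 p.2)]
    rfl
  have hsupp : ∀ p, (univ.filter fun i => T p i ≠ 0) = J ↔ (∀ i, p.1 i ≠ 0) ∧ p.2 = 0 := by
    intro p
    constructor
    · intro h
      constructor
      · intro i
        have := he1 i
        rw [← h] at this
        simpa [hT] using this
      · funext i
        have := he2 i
        rw [← h] at this
        simpa [hT] using this
    · rintro ⟨h1, h2⟩
      ext i
      obtain ⟨j, rfl⟩ := e.surjective i
      rcases j with j | j
      · simp [hT, h1 j, he1 j]
      · simp [hT, h2, he2 j]
  rw [← T.sum_comp, Fintype.sum_prod_type, S]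
  refine Finset.sum_congr rfl fun α _ => ?_
  simp only [hsupp, hphi]
  rw [Finset.sum_eq_single 0]
  · have : phi (Sum.elim α (0 : Fin (n - m) → AddChar G ℂ)) = phi α :=
      phi_sum_elim_zero (by simp; omega) α
    rw [this, wt_eq_ite]
    simp
  · intro β _ hβ
    simp [hβ]
  · simp

/-- The `n`-tuples with exactly `m` nontrivial entries, summed over the choices of their positions.
-/
lemma sum_supp_card {n m : ℕ} (hn : Fintype.card G = n) (hm : m ≤ n) :
    ∑ χ : Fin n → AddChar G ℂ, (if #(univ.filter fun i => χ i ≠ 0) = m then phi χ ^ 3 else 0)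
      = n.choose m * S G m := by
  have h1 : ∀ χ : Fin n → AddChar G ℂ,
      (if #(univ.filter fun i => χ i ≠ 0) = m then phi χ ^ 3 else 0)
      = ∑ J ∈ powersetCard m (univ : Finset (Fin n)),
        if (univ.filter fun i => χ i ≠ 0) = J then phi χ ^ 3 else 0 := by
    intro χ
    rw [Finset.sum_ite_eq]
    simp [Finset.mem_powersetCard]
  simp only [h1]
  rw [Finset.sum_comm, Finset.sum_congr rfl fun J hJ =>
    sum_supp_eq hn hm J (Finset.mem_powersetCard.1 hJ).2]
  simp

/-- Splits the `n`-tuples of characters into those where some `ψ` occurs with at most `n / q`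
exceptions and the rest. As `q > 2`, such a `ψ` is unique; by `phi_add_const` each of the `n`
choices of `ψ` contributes as much as `ψ = 0`. -/
lemma sum_decomp {n : ℕ} (hn : Fintype.card G = n) (hG : ∑ x : G, x = 0) (h0 : 0 < n) {q : ℕ}
    (hq : 2 < q) :
    ∑ χ : Fin n → AddChar G ℂ, phi χ ^ 3
      = n * (∑ m ∈ range (n + 1), if q * m ≤ n then n.choose m * S G m else 0)
        + ∑ χ : Fin n → AddChar G ℂ,
          if ∀ ψ, n < q * (n - cnt χ ψ) then phi χ ^ 3 else 0 := by
  have hc : ∀ (χ : Fin n → AddChar G ℂ) ψ, #(univ.filter fun i => χ i ≠ ψ) = n - cnt χ ψ := by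
    intro χ ψ
    have := Finset.card_filter_add_card_filter_not (s := (univ : Finset (Fin n)))
      (fun i => χ i = ψ)
    simp only [Finset.card_univ, Fintype.card_fin] at this
    unfold cnt
    simp only [ne_eq]
    omega
  -- at most one character can be this frequent
  have huniq : ∀ (χ : Fin n → AddChar G ℂ), phi χ ^ 3
      = (∑ ψ, if q * (n - cnt χ ψ) ≤ n then phi χ ^ 3 else 0)
        + if ∀ ψ, n < q * (n - cnt χ ψ) then phi χ ^ 3 else 0 := by
    intro χ
    by_cases h : ∀ ψ, n < q * (n - cnt χ ψ)
    · rw [if_pos h, Finset.sum_eq_zero, zero_add]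
      intro ψ _
      rw [if_neg (by have := h ψ; omega)]
    · rw [if_neg h, add_zero]
      push Not at h
      obtain ⟨ψ, hψ⟩ := h
      rw [Finset.sum_eq_single ψ, if_pos hψ]
      · intro ψ' _ hne
        rw [if_neg]
        intro h'
        have h1 : cnt χ ψ + cnt χ ψ' ≤ n := by
          have a1 := sum_cnt χ
          rw [Fintype.card_fin] at a1
          have a2 := Finset.sum_le_sum_of_subset (f := cnt χ)
            (Finset.subset_univ ({ψ, ψ'} : Finset (AddChar G ℂ)))
          rw [Finset.sum_pair (Ne.symm hne)] at a2
          omega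
        have h2 : 3 * (n - cnt χ ψ) ≤ n := le_trans (Nat.mul_le_mul_right _ hq) hψ
        have h3 : 3 * (n - cnt χ ψ') ≤ n := le_trans (Nat.mul_le_mul_right _ hq) h'
        omega
      · simp
  rw [Finset.sum_congr rfl fun χ _ => huniq χ, Finset.sum_add_distrib]
  congr 1
  rw [Finset.sum_comm]
  have hψ : ∀ ψ : AddChar G ℂ,
      ∑ χ : Fin n → AddChar G ℂ, (if q * (n - cnt χ ψ) ≤ n then phi χ ^ 3 else 0)
      = ∑ m ∈ range (n + 1), if q * m ≤ n then n.choose m * S G m else 0 := by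
    intro ψ
    have e1 : ∑ χ : Fin n → AddChar G ℂ, (if q * (n - cnt χ ψ) ≤ n then phi χ ^ 3 else 0)
        = ∑ χ : Fin n → AddChar G ℂ,
          (if q * #(univ.filter fun i => χ i ≠ 0) ≤ n then phi χ ^ 3 else 0) := by
      refine Fintype.sum_equiv (Equiv.subRight (fun _ => ψ)) _ _ fun χ => ?_
      rw [Equiv.subRight_apply, ← hc]
      have e2 : phi (χ - fun _ => ψ) = phi χ := by
        rw [← phi_add_const hn hG χ (-ψ)]
        congr 1
      rw [e2]
      simp [sub_eq_zero]
    rw [e1]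
    have e3 : ∀ χ : Fin n → AddChar G ℂ,
        (if q * #(univ.filter fun i => χ i ≠ 0) ≤ n then phi χ ^ 3 else 0)
        = ∑ m ∈ range (n + 1), if q * m ≤ n then
          (if #(univ.filter fun i => χ i ≠ 0) = m then phi χ ^ 3 else 0) else 0 := by
      intro χ
      have hle : #(univ.filter fun i => χ i ≠ 0) ≤ n := by
        have := Finset.card_le_univ (univ.filter fun i => χ i ≠ 0)
        rwa [Fintype.card_fin] at this
      rw [Finset.sum_eq_single (#(univ.filter fun i => χ i ≠ 0))]
      · simp
      · intro m _ hm
        simp [Ne.symm hm]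
      · intro h
        exact absurd (Finset.mem_range.2 (Nat.lt_succ_of_le hle)) h
    rw [Finset.sum_congr rfl fun χ _ => e3 χ, Finset.sum_comm]
    refine Finset.sum_congr rfl fun m hm => ?_
    split_ifs with h
    · exact sum_supp_card hn (by simp at hm; omega)
    · simp
  rw [Finset.sum_congr rfl fun ψ _ => hψ ψ, Finset.sum_const, Finset.card_univ, nsmul_eq_mul,
    AddChar.card_eq, hn]

end Fourier
/-! ### Uniform bound on the sparse part -/

section Types

variable {ι X : Type} [Fintype ι] [DecidableEq ι] [Fintype X]

lemma Es_sq (f : ι → X) : Es f ^ 2 = ∏ x, (cnt f x : ℝ) ^ cnt f x := by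
  unfold Es
  rw [← Finset.prod_pow]
  refine Finset.prod_congr rfl fun x _ => ?_
  rw [← pow_mul, mul_comm, pow_mul, Real.sq_sqrt (by positivity)]

/-- The multinomial theorem applied to `(∑ x, a x) ^ m`, retaining only the tuples of type `a`. -/
lemma card_type_mul_le (a : X → ℕ) :
    (#{f : ι → X | cnt f = a} : ℝ) * ∏ x, (a x : ℝ) ^ a x
      ≤ (Fintype.card ι : ℝ) ^ Fintype.card ι := by
  by_cases h : ∃ f : ι → X, cnt f = a
  · obtain ⟨f₀, hf₀⟩ := h
    have hs : ∑ x, (a x : ℝ) = Fintype.card ι := by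
      rw [← hf₀]; exact_mod_cast sum_cnt f₀
    have h1 : ∑ f : ι → X, ∏ i, (a (f i) : ℝ) = (Fintype.card ι : ℝ) ^ Fintype.card ι := by
      have := (Finset.prod_univ_sum (fun _ : ι => (univ : Finset X)) (fun _ x => (a x : ℝ))).symm
      rw [Fintype.piFinset_univ] at this
      rw [this, hs]
      simp
    rw [← h1, ← nsmul_eq_mul, ← Finset.sum_const]
    refine le_trans (Finset.sum_le_sum fun f hf => ?_)
      (Finset.sum_le_sum_of_subset_of_nonneg (Finset.subset_univ _)
        fun f _ _ => Finset.prod_nonneg fun i _ => Nat.cast_nonneg _)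
    simp only [Finset.mem_filter] at hf
    rw [prod_comp_cnt f (fun x => (a x : ℝ)), hf.2]
  · have : #{f : ι → X | cnt f = a} = 0 := by
      rw [Finset.card_eq_zero, Finset.filter_eq_empty_iff]
      exact fun f _ hf => h ⟨f, hf⟩
    rw [this]
    simp

/-- Since `Es f ^ 2 = ∏ a ^ a`, summing over tuples reduces to summing over types, at the cost of
`m ^ m`. -/
lemma type_sum_le (Φ : (X → ℕ) → ℝ) (hΦ : ∀ a, 0 ≤ Φ a) :
    ∑ f : ι → X, Es f ^ 2 * Φ (cnt f) ≤ (Fintype.card ι : ℝ) ^ Fintype.card ι *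
      ∑ a ∈ Fintype.piFinset (fun _ : X => range (Fintype.card ι + 1)), Φ a := by
  rw [← Finset.sum_fiberwise_of_maps_to (s := univ) (g := fun f : ι → X => cnt f)
    (t := Fintype.piFinset (fun _ : X => range (Fintype.card ι + 1)))
    (fun f _ => by
      rw [Fintype.mem_piFinset]
      intro x
      exact Finset.mem_range.2 (Nat.lt_succ_of_le (cnt_le f x))), Finset.mul_sum]
  refine Finset.sum_le_sum fun a _ => ?_
  have : ∑ f ∈ univ.filter (fun f : ι → X => cnt f = a), Es f ^ 2 * Φ (cnt f)
      = (#{f : ι → X | cnt f = a} : ℝ) * (∏ x, (a x : ℝ) ^ a x) * Φ a := by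
    rw [mul_assoc, ← nsmul_eq_mul, ← Finset.sum_const]
    refine Finset.sum_congr rfl fun f hf => ?_
    simp only [Finset.mem_filter] at hf
    rw [Es_sq, hf.2]
  rw [this]
  exact mul_le_mul_of_nonneg_right (card_type_mul_le a) (hΦ a)

/-- The number of distinct values taken by a tuple of type `a`. -/
def supp (a : X → ℕ) : ℕ := #{x | a x ≠ 0}

/-- Counts the types of size `m` with fewer than `m / 4` distinct values. Each value `b > 0`
receives weight `c / 2 ^ b`: such a type then has weight at least `(2 lam)^(-m)`, while the total
weight is at most `(1 + c) ^ #X ≤ e ^ m`. -/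
lemma card_types_le {m : ℕ} (lam c : ℝ) (hl : 1 ≤ lam) (hc : 0 < c) (hlc : lam ^ 4 * c = 1)
    (hcm : c * Fintype.card X = m) :
    ∑ a ∈ Fintype.piFinset (fun _ : X => range (m + 1)),
      (if ∑ x, a x = m ∧ 4 * supp a < m then (1 : ℝ) else 0) ≤ (6 * lam) ^ m := by
  set w : ℕ → ℝ := fun b => if b = 0 then 1 else c * (1 / 2) ^ b with hw
  have hw0 : ∀ b, 0 ≤ w b := by intro b; simp only [hw]; split_ifs <;> positivity
  have h1 : ∀ a : X → ℕ, (if ∑ x, a x = m ∧ 4 * supp a < m then (1 : ℝ) else 0)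
      ≤ (2 * lam) ^ m * ∏ x, w (a x) := by
    intro a
    split_ifs with h
    · obtain ⟨hs, hk⟩ := h
      have e1 : ∏ x, w (a x) = c ^ supp a * (1 / 2) ^ m := by
        have : ∀ x, w (a x) = (if a x ≠ 0 then c else 1) * (1 / 2) ^ a x := by
          intro x; simp only [hw]; by_cases hx : a x = 0 <;> simp [hx]
        rw [Finset.prod_congr rfl fun x _ => this x, Finset.prod_mul_distrib,
          Finset.prod_pow_eq_pow_sum, hs, ← Finset.prod_filter, Finset.prod_const, supp]
      rw [e1, mul_pow]
      have e2 : (2 : ℝ) ^ m * (1 / 2) ^ m = 1 := by rw [← mul_pow]; norm_num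
      have e3 : (lam ^ 4) ^ supp a * c ^ supp a = 1 := by rw [← mul_pow, hlc, one_pow]
      have e4 : (lam ^ 4) ^ supp a ≤ lam ^ m := by
        rw [← pow_mul]; exact pow_le_pow_right₀ hl hk.le
      calc (1 : ℝ) = (2 ^ m * (1 / 2) ^ m) * ((lam ^ 4) ^ supp a * c ^ supp a) := by
            rw [e2, e3, one_mul]
        _ ≤ (2 ^ m * (1 / 2) ^ m) * (lam ^ m * c ^ supp a) := by gcongr
        _ = _ := by ring
    · have := Finset.prod_nonneg (s := univ) fun x (_ : x ∈ univ) => hw0 (a x)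
      positivity
  refine (Finset.sum_le_sum fun a _ => h1 a).trans ?_
  rw [← Finset.mul_sum, ← Finset.prod_univ_sum (fun _ : X => range (m + 1)) (fun _ b => w b)]
  have h2 : ∑ b ∈ range (m + 1), w b ≤ 1 + c := by
    rw [Finset.sum_range_succ']
    have : ∀ b, w (b + 1) = c * ((1 / 2) * (1 / 2) ^ b) := by
      intro b; simp only [hw, Nat.succ_ne_zero, if_false]; ring
    rw [Finset.sum_congr rfl fun b _ => this b, ← Finset.mul_sum, ← Finset.mul_sum]
    have h3 : ∑ b ∈ range m, (1 / 2 : ℝ) ^ b ≤ 2 := by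
      rw [geom_sum_eq (by norm_num)]
      have : (0 : ℝ) ≤ (1 / 2) ^ m := by positivity
      rw [div_le_iff_of_neg (by norm_num)]
      linarith
    have : w 0 = 1 := by simp [hw]
    rw [this]
    nlinarith
  rw [Finset.prod_const, Finset.card_univ]
  have h4 : (∑ b ∈ range (m + 1), w b) ^ Fintype.card X ≤ 3 ^ m := by
    calc _ ≤ (Real.exp c) ^ Fintype.card X := by
          refine pow_le_pow_left₀ (Finset.sum_nonneg fun b _ => hw0 b) ?_ _
          linarith [Real.add_one_le_exp c]
      _ = Real.exp 1 ^ m := by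
          rw [← Real.exp_nat_mul, ← Real.exp_nat_mul, mul_comm, hcm, mul_one]
      _ ≤ 3 ^ m := by gcongr; linarith [Real.exp_one_lt_d9]
  calc _ ≤ (2 * lam) ^ m * 3 ^ m := by gcongr
    _ = _ := by rw [← mul_pow]; ring

/-- Every distinct value of `f` saves a factor `√m` over the trivial bound `Es f ≤ √m ^ m`. -/
lemma Es_le_of_supp (f : ι → X) :
    Es f * √(Fintype.card ι : ℝ) ^ supp (cnt f)
      ≤ 2 ^ Fintype.card ι * √(Fintype.card ι : ℝ) ^ Fintype.card ι := by
  set m := Fintype.card ι with hm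
  have h1 : ∏ x, √(m : ℝ) ^ (if cnt f x ≠ 0 then 1 else 0) = √(m : ℝ) ^ supp (cnt f) := by
    rw [Finset.prod_pow_eq_pow_sum, supp, Finset.card_filter]
  have h2 : ∏ x, (2 * √(m : ℝ)) ^ cnt f x = 2 ^ m * √(m : ℝ) ^ m := by
    rw [Finset.prod_pow_eq_pow_sum, sum_cnt, ← hm, mul_pow]
  rw [← h1, ← h2, Es, ← Finset.prod_mul_distrib]
  refine Finset.prod_le_prod (fun x _ => by positivity) fun x _ => ?_
  have hle := cnt_le f x
  rw [← hm] at hle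
  rcases Nat.eq_zero_or_pos (cnt f x) with h | h
  · simp [h]
  · obtain ⟨b, hb⟩ : ∃ b, cnt f x = b + 1 := ⟨cnt f x - 1, by omega⟩
    rw [hb] at hle ⊢
    rw [if_pos (Nat.succ_ne_zero b), mul_pow, pow_one]
    have e1 : √((b + 1 : ℕ) : ℝ) ≤ √(m : ℝ) := Real.sqrt_le_sqrt (by exact_mod_cast hle)
    have e2 : √((b + 1 : ℕ) : ℝ) ≤ 2 ^ (b + 1) := by
      have : ((b + 1 : ℕ) : ℝ) ≤ 2 ^ (b + 1) := by exact_mod_cast (Nat.lt_two_pow_self (n := b + 1)).le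
      refine Real.sqrt_le_iff.2 ⟨by positivity, this.trans ?_⟩
      exact le_self_pow₀ (one_le_pow₀ (by norm_num)) (by norm_num)
    calc √((b + 1 : ℕ) : ℝ) ^ (b + 1) * √(m : ℝ)
        = √((b + 1 : ℕ) : ℝ) * (√((b + 1 : ℕ) : ℝ) ^ b * √(m : ℝ)) := by ring
      _ ≤ 2 ^ (b + 1) * (√(m : ℝ) ^ b * √(m : ℝ)) := by gcongr
      _ = _ := by ring

end Types

section Fourier

variable {G : Type} [AddCommGroup G] [Fintype G]

lemma choose_mul_le (n m : ℕ) : (n.choose m : ℝ) * (m : ℝ) ^ m ≤ 3 ^ m * (n : ℝ) ^ m := by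
  have h1 : (n.choose m : ℝ) ≤ (n : ℝ) ^ m / m.factorial := Nat.choose_le_pow_div m n
  have h2 : (m : ℝ) ^ m / m.factorial ≤ Real.exp m := Real.pow_div_factorial_le_exp (x := m) (by positivity) m
  have h3 : Real.exp m ≤ 3 ^ m := by
    rw [← mul_one (m : ℝ), Real.exp_nat_mul]
    gcongr; linarith [Real.exp_one_lt_d9]
  calc (n.choose m : ℝ) * (m : ℝ) ^ m ≤ (n : ℝ) ^ m / m.factorial * (m : ℝ) ^ m := by gcongr
    _ = (m : ℝ) ^ m / m.factorial * (n : ℝ) ^ m := by ring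
    _ ≤ _ := by gcongr; exact h2.trans h3

/-- A tuple with at least `m / 4` distinct characters gains `m ^ (-m/8)` over the generic bound
`phi_le_sqrt`, up to a factor `2 ^ m`. -/
lemma phi_le_spread {m : ℕ} (hm : 0 < m) (h2 : 2 * m ≤ Fintype.card G)
    (χ : Fin m → AddChar G ℂ) (hw : wt χ ≠ 0) (hk : m ≤ 4 * supp (cnt χ)) :
    |phi χ| ≤ (8 * √(m : ℝ) / √√√(m : ℝ)) ^ m * pp G ^ m := by
  set t := √√√(m : ℝ) with ht
  have hm1 : (1 : ℝ) ≤ m := by exact_mod_cast hm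
  have ht1 : 1 ≤ t := by rw [ht]; simp [Real.one_le_sqrt, hm1]
  have ht4 : t ^ 4 = √(m : ℝ) := by
    rw [show t ^ 4 = (t ^ 2) ^ 2 by ring, ht, Real.sq_sqrt (by positivity),
      Real.sq_sqrt (by positivity)]
  have hp := pp_pos (G := G)
  have h3 := Es_le_of_supp χ
  rw [Fintype.card_fin] at h3
  have h4 : Es χ * t ^ m ≤ 2 ^ m * √(m : ℝ) ^ m := by
    refine le_trans (mul_le_mul_of_nonneg_left ?_ (Es_nonneg χ)) h3
    rw [← ht4, ← pow_mul]
    exact pow_le_pow_right₀ ht1 hk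
  have h5 := phi_le h2 χ hw
  refine h5.trans ?_
  rw [pp, inv_pow, ← div_eq_mul_inv]
  gcongr
  rw [div_pow, le_div_iff₀ (by positivity), mul_pow]
  calc 4 ^ m * Es χ * t ^ m = 4 ^ m * (Es χ * t ^ m) := by ring
    _ ≤ 4 ^ m * (2 ^ m * √(m : ℝ) ^ m) := by gcongr
    _ = _ := by rw [← mul_assoc, ← mul_pow]; norm_num

/-- The tuples with fewer than `m / 4` distinct characters: two of the three factors `Es` are
absorbed by `type_sum_le`, and the types are counted by `card_types_le` with `lam = (n/m)^(1/4)`.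
-/
lemma sum_concentrated {m : ℕ} (hm : 0 < m) (h2 : 2 * m ≤ Fintype.card G) :
    ∑ χ : Fin m → AddChar G ℂ, (if 4 * supp (cnt χ) < m then wt χ * |phi χ| ^ 3 else 0)
      ≤ 64 ^ m * pp G ^ (3 * m) * √(m : ℝ) ^ m *
        ((m : ℝ) ^ m * (6 * √√((Fintype.card G : ℝ) / m)) ^ m) := by
  have hm0 : (0 : ℝ) < m := by exact_mod_cast hm
  have hp := pp_pos (G := G)
  have hn := card_pos' (G := G)
  set Φ : (AddChar G ℂ → ℕ) → ℝ :=
    fun a => if ∑ x, a x = m ∧ 4 * supp a < m then (1 : ℝ) else 0 with hΦ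
  have h1 : ∀ χ : Fin m → AddChar G ℂ,
      (if 4 * supp (cnt χ) < m then wt χ * |phi χ| ^ 3 else 0)
      ≤ 64 ^ m * pp G ^ (3 * m) * √(m : ℝ) ^ m * (Es χ ^ 2 * Φ (cnt χ)) := by
    intro χ
    have hs := sum_cnt χ
    rw [Fintype.card_fin] at hs
    have hE := Es_nonneg χ
    simp only [hΦ, hs, true_and]
    split_ifs with h
    · by_cases hw : wt χ = 0
      · rw [hw, zero_mul]; positivity
      · rw [wt_eq_one hw, one_mul, mul_one]
        have e1 := phi_le h2 χ hw
        have e2 := Es_le χ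
        rw [Fintype.card_fin] at e2
        have e3 : 4 ^ m * Es χ / √(Fintype.card G : ℝ) ^ m = 4 ^ m * Es χ * pp G ^ m := by
          rw [pp, inv_pow, div_eq_mul_inv]
        rw [e3] at e1
        calc |phi χ| ^ 3 ≤ (4 ^ m * Es χ * pp G ^ m) ^ 3 := by gcongr
          _ = (4 ^ m) ^ 3 * pp G ^ (3 * m) * Es χ * Es χ ^ 2 := by ring
          _ = 64 ^ m * pp G ^ (3 * m) * Es χ * Es χ ^ 2 := by
              rw [← pow_mul, mul_comm m 3, pow_mul]; norm_num
          _ ≤ _ := by gcongr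
    · simp
  refine (Finset.sum_le_sum fun χ _ => h1 χ).trans ?_
  rw [← Finset.mul_sum]
  refine mul_le_mul_of_nonneg_left ?_ (by positivity)
  have h3 := type_sum_le (ι := Fin m) Φ (fun a => by simp only [hΦ]; split_ifs <;> norm_num)
  rw [Fintype.card_fin] at h3
  refine h3.trans (mul_le_mul_of_nonneg_left ?_ (by positivity))
  refine card_types_le (m := m) _ ((m : ℝ) / Fintype.card G) ?_ (by positivity) ?_ ?_
  · rw [Real.one_le_sqrt, Real.one_le_sqrt, one_le_div hm0]
    exact_mod_cast (by omega : m ≤ Fintype.card G)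
  · rw [show ∀ y : ℝ, y ^ 4 = (y ^ 2) ^ 2 by intro y; ring, Real.sq_sqrt (by positivity),
      Real.sq_sqrt (by positivity)]
    field_simp
  · rw [AddChar.card_eq]; field_simp

/-- A summable majorant, uniform in `G`, for the contribution of tuples with `m` nontrivial
entries. The first summand comes from tuples with many distinct characters, via `phi_le_spread` and
`A_le`; the second from `sum_concentrated`, where the constant `2304 = 2 * 1152` makes the base at
most `1/2`. -/
lemma sparse_bound {m : ℕ} (h : 2304 ^ 4 * m ≤ Fintype.card G) :
    |((Fintype.card G).choose m : ℝ) * S G m| ≤ (120 / √√√(m : ℝ)) ^ m + (1 / 2) ^ m := by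
  rcases Nat.eq_zero_or_pos m with rfl | hm
  · rw [S_zero]; norm_num
  have h2 : 2 * m ≤ Fintype.card G := le_trans (Nat.mul_le_mul_right m (by norm_num)) h
  have hp := pp_pos (G := G)
  have hm0 : (0 : ℝ) < m := by exact_mod_cast hm
  have hn0 := card_pos' (G := G)
  have h1 : Sabs G m ≤ (8 * √(m : ℝ) / √√√(m : ℝ)) ^ m * pp G ^ m * A G m
      + ∑ χ : Fin m → AddChar G ℂ, (if 4 * supp (cnt χ) < m then wt χ * |phi χ| ^ 3 else 0) := by
    rw [Sabs, A, Finset.mul_sum, ← Finset.sum_add_distrib]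
    refine Finset.sum_le_sum fun χ _ => ?_
    have hw0 := wt_nonneg χ
    split_ifs with hk
    · have : 0 ≤ (8 * √(m : ℝ) / √√√(m : ℝ)) ^ m * pp G ^ m * (wt χ * phi χ ^ 2) := by positivity
      linarith
    · rw [add_zero]
      by_cases hw : wt χ = 0
      · simp [hw]
      · have := phi_le_spread hm h2 χ hw (by omega)
        calc wt χ * |phi χ| ^ 3 = |phi χ| * (wt χ * phi χ ^ 2) := by
              rw [← sq_abs (phi χ)]; ring
          _ ≤ _ := by gcongr
  have hA := A_le (G := G) h2
  have hC := sum_concentrated (G := G) hm h2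
  have hch := choose_mul_le (Fintype.card G) m
  have hnp : (Fintype.card G : ℝ) ^ m * pp G ^ (2 * m) = 1 := by
    rw [pow_mul, ← mul_pow, card_mul_pp, one_pow]
  set n : ℝ := (Fintype.card G : ℝ) with hn
  set N : ℝ := ((Fintype.card G).choose m : ℝ) with hN
  have hN0 : 0 ≤ N := by positivity
  have hmm : √(m : ℝ) ^ m * √(m : ℝ) ^ m = (m : ℝ) ^ m := by
    rw [← mul_pow, Real.mul_self_sqrt hm0.le]
  have P1 : N * ((8 * √(m : ℝ) / √√√(m : ℝ)) ^ m * pp G ^ m * A G m)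
      ≤ (120 / √√√(m : ℝ)) ^ m := by
    calc _ ≤ N * ((8 * √(m : ℝ) / √√√(m : ℝ)) ^ m * pp G ^ m *
          ((5 * √(m : ℝ)) ^ m * pp G ^ m)) := by gcongr
      _ = N * (√(m : ℝ) ^ m * √(m : ℝ) ^ m) * ((8 ^ m * 5 ^ m) / √√√(m : ℝ) ^ m
          * pp G ^ (2 * m)) := by
          rw [div_pow, mul_pow, mul_pow]; ring
      _ = (N * (m : ℝ) ^ m) * ((8 ^ m * 5 ^ m) / √√√(m : ℝ) ^ m * pp G ^ (2 * m)) := by rw [hmm]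
      _ ≤ (3 ^ m * n ^ m) * ((8 ^ m * 5 ^ m) / √√√(m : ℝ) ^ m * pp G ^ (2 * m)) := by gcongr
      _ = (3 ^ m * 8 ^ m * 5 ^ m) / √√√(m : ℝ) ^ m * (n ^ m * pp G ^ (2 * m)) := by ring
      _ = _ := by
          rw [hnp, mul_one, ← mul_pow, ← mul_pow, ← div_pow]; norm_num
  set lam := √√(n / m) with hlam
  have hl : 2304 ≤ lam := by
    rw [hlam]
    apply Real.le_sqrt_of_sq_le
    apply Real.le_sqrt_of_sq_le
    rw [le_div_iff₀ hm0]
    have : ((2304 ^ 4 * m : ℕ) : ℝ) ≤ n := by rw [hn]; exact_mod_cast h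
    push_cast at this
    linarith
  have hl0 : 0 < lam := by linarith
  -- `√m / √n = lam⁻²`
  have hsl : √(m : ℝ) * pp G * lam ^ 2 = 1 := by
    rw [hlam, Real.sq_sqrt (by positivity), pp, Real.sqrt_div hn0.le]
    have : √(m : ℝ) ≠ 0 := (Real.sqrt_pos.2 hm0).ne'
    have : √n ≠ 0 := (Real.sqrt_pos.2 hn0).ne'
    rw [← hn]
    field_simp
  have P2 : N * (64 ^ m * pp G ^ (3 * m) * √(m : ℝ) ^ m * ((m : ℝ) ^ m * (6 * lam) ^ m))
      ≤ (1 / 2) ^ m := by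
    calc _ = (N * (m : ℝ) ^ m) * (64 ^ m * pp G ^ (3 * m) * √(m : ℝ) ^ m * (6 * lam) ^ m) := by ring
      _ ≤ (3 ^ m * n ^ m) * (64 ^ m * pp G ^ (3 * m) * √(m : ℝ) ^ m * (6 * lam) ^ m) := by gcongr
      _ = (3 * 64 * 6 * (√(m : ℝ) * pp G * lam)) ^ m * (n ^ m * pp G ^ (2 * m)) := by
          simp only [mul_pow]; ring
      _ = (1152 * (√(m : ℝ) * pp G * lam)) ^ m := by rw [hnp, mul_one]; norm_num
      _ ≤ (1 / 2) ^ m := by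
          have hx : √(m : ℝ) * pp G * lam * lam = 1 := by rw [← hsl]; ring
          have hx0 : 0 ≤ √(m : ℝ) * pp G * lam := by positivity
          gcongr
          nlinarith
  rw [abs_mul, abs_of_nonneg hN0]
  calc N * |S G m| ≤ N * ((8 * √(m : ℝ) / √√√(m : ℝ)) ^ m * pp G ^ m * A G m
        + 64 ^ m * pp G ^ (3 * m) * √(m : ℝ) ^ m * ((m : ℝ) ^ m * (6 * lam) ^ m)) := by
        gcongr
        exact (abs_S_le m).trans (h1.trans (by gcongr))
    _ ≤ _ := by rw [mul_add]; exact add_le_add P1 P2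

lemma summable_bound : Summable fun m : ℕ => (120 / √√√(m : ℝ)) ^ m + (1 / 2 : ℝ) ^ m := by
  have hg : Summable fun m : ℕ => (1 / 2 : ℝ) ^ m := summable_geometric_two
  refine Summable.add ?_ hg
  refine Summable.of_norm_bounded_eventually_nat hg ?_
  filter_upwards [Filter.eventually_ge_atTop (240 ^ 8)] with m hm
  have hm' : ((240 : ℝ) ^ 8) ≤ m := by exact_mod_cast hm
  have h1 : 240 ≤ √√√(m : ℝ) := by
    apply Real.le_sqrt_of_sq_le
    apply Real.le_sqrt_of_sq_le
    apply Real.le_sqrt_of_sq_le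
    linarith
  rw [Real.norm_of_nonneg (by positivity)]
  refine pow_le_pow_left₀ (by positivity) ?_ m
  rw [div_le_div_iff₀ (by linarith) (by norm_num)]
  linarith

end Fourier
/-! ### The dense part -/

section Fourier

variable {G : Type} [AddCommGroup G] [Fintype G]

/-- The polynomial factor in the upper Stirling bound `a! ≤ gg a * (a / e) ^ a`. -/
noncomputable def gg (a : ℕ) : ℝ := if a = 0 then 1 else 3 * √(a : ℝ)

lemma gg_pos (a : ℕ) : 0 < gg a := by
  unfold gg
  split_ifs with h
  · norm_num
  · have : 0 < a := Nat.pos_of_ne_zero h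
    positivity

lemma factorial_le_gg (a : ℕ) :
    (a.factorial : ℝ) ≤ gg a * ((a : ℝ) ^ a / Real.exp 1 ^ a) := by
  rcases Nat.eq_zero_or_pos a with rfl | ha
  · simp [gg]
  · obtain ⟨b, rfl⟩ : ∃ b, a = b + 1 := ⟨a - 1, by omega⟩
    have h1 : Stirling.stirlingSeq (b + 1) ≤ Stirling.stirlingSeq 1 :=
      Stirling.stirlingSeq'_antitone (Nat.zero_le b)
    rw [Stirling.stirlingSeq_one, Stirling.stirlingSeq] at h1
    have hb : (0 : ℝ) < (b + 1 : ℕ) := by positivity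
    have hs2 : (0 : ℝ) < √2 := by positivity
    rw [div_le_div_iff₀ (by positivity) hs2, Real.sqrt_mul (by norm_num)] at h1
    rw [gg, if_neg (Nat.succ_ne_zero b)]
    have h2 : ((b + 1).factorial : ℝ)
        ≤ Real.exp 1 * (√((b + 1 : ℕ) : ℝ) * (((b + 1 : ℕ) : ℝ) / Real.exp 1) ^ (b + 1)) := by
      refine le_of_mul_le_mul_right (h1.trans_eq ?_) hs2
      ring
    rw [div_pow] at h2
    calc _ ≤ _ := h2
      _ ≤ 3 * (√((b + 1 : ℕ) : ℝ) * (((b + 1 : ℕ) : ℝ) ^ (b + 1) / Real.exp 1 ^ (b + 1))) := by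
          gcongr
          linarith [Real.exp_one_lt_d9]
      _ = _ := by ring

/-- The bound `hadamard` with the factorials estimated by Stirling's formula; the powers of `e`
cancel because the multiplicities add up to `n`. -/
lemma phi_le_gg {n : ℕ} (hn : Fintype.card G = n) (χ : Fin n → AddChar G ℂ) :
    |phi χ| ≤ (∏ ψ, gg (cnt χ ψ)) * Es χ / √(n : ℝ) ^ n := by
  have hn0 : (0 : ℝ) < n := by rw [← hn]; exact card_pos'
  have hh := hadamard (ι := Fin n) (by simp [hn]) χ
  rw [hn] at hh
  have hE := Es_pos χ
  have hsn : 0 < √(n : ℝ) := Real.sqrt_pos.2 hn0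
  have hcs : ∑ ψ, cnt χ ψ = n := by rw [sum_cnt, Fintype.card_fin]
  have e1 : ∏ ψ, √((cnt χ ψ : ℝ) / n) ^ cnt χ ψ = Es χ / √(n : ℝ) ^ n := by
    have : (√(n : ℝ)) ^ n = ∏ ψ, √(n : ℝ) ^ cnt χ ψ := by
      rw [Finset.prod_pow_eq_pow_sum, hcs]
    rw [this, Es, ← Finset.prod_div_distrib]
    refine Finset.prod_congr rfl fun ψ _ => ?_
    rw [Real.sqrt_div (by positivity), div_pow]
  set Q := ∏ ψ, gg (cnt χ ψ) with hQ
  have hQ0 : 0 < Q := Finset.prod_pos fun _ _ => gg_pos _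
  have hex : (0 : ℝ) < Real.exp 1 ^ n := by positivity
  have e2 : ∏ ψ, ((cnt χ ψ).factorial : ℝ) ≤ Q * (Es χ ^ 2 / Real.exp 1 ^ n) := by
    have : Real.exp 1 ^ n = ∏ ψ, Real.exp 1 ^ cnt χ ψ := by
      rw [Finset.prod_pow_eq_pow_sum, hcs]
    rw [this, Es_sq, hQ, ← Finset.prod_div_distrib, ← Finset.prod_mul_distrib]
    exact Finset.prod_le_prod (fun _ _ => by positivity) fun ψ _ => factorial_le_gg _
  have e3 : (n : ℝ) ^ n / Real.exp 1 ^ n ≤ n.factorial := by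
    have := Real.pow_div_factorial_le_exp (x := n) (by positivity) n
    rw [div_le_iff₀ (by positivity), ← mul_one (Real.exp n), ← mul_one (n : ℝ),
      Real.exp_nat_mul] at this
    rw [div_le_iff₀ hex]
    simpa [mul_comm] using this
  rw [e1] at hh
  have e4 : (n : ℝ) ^ n = √(n : ℝ) ^ n * √(n : ℝ) ^ n := by
    rw [← mul_pow, Real.mul_self_sqrt hn0.le]
  have e5 : |phi χ| * ((n : ℝ) ^ n / Real.exp 1 ^ n) * (Es χ / √(n : ℝ) ^ n)
      ≤ Q * (Es χ ^ 2 / Real.exp 1 ^ n) := by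
    refine le_trans ?_ (hh.trans e2)
    gcongr
  rw [le_div_iff₀ (by positivity)]
  have : 0 < Es χ / Real.exp 1 ^ n := by positivity
  refine le_of_mul_le_mul_right ?_ this
  calc |phi χ| * √(n : ℝ) ^ n * (Es χ / Real.exp 1 ^ n)
      = |phi χ| * ((n : ℝ) ^ n / Real.exp 1 ^ n) * (Es χ / √(n : ℝ) ^ n) := by
        rw [e4]; field_simp
    _ ≤ _ := e5
    _ = _ := by ring

/-- The fourth root of `1 - 1/q`, the exponential rate of decay of the dense part. If `b / n < 1 -
1/q` then `√(b / n) / kap q` is still at most `kap q`. -/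
noncomputable def kap (q : ℕ) : ℝ := √√(1 - 1 / (q : ℝ))

/-- The weight of a single character of multiplicity `b` in the product bound for dense tuples; it
vanishes when `b` is too large for the tuple to be dense. -/
noncomputable def ww (q n b : ℕ) : ℝ :=
  if b = 0 then 1 else if n < q * (n - b) then gg b ^ 3 * (√((b : ℝ) / n) / kap q) ^ b else 0

lemma kap_pos {q : ℕ} (hq : 2 < q) : 0 < kap q := by
  have : (1 : ℝ) < q := by exact_mod_cast (by omega : 1 < q)
  have : 1 / (q : ℝ) < 1 := by rw [div_lt_one (by linarith)]; exact this
  unfold kap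
  rw [Real.sqrt_pos, Real.sqrt_pos]
  linarith

lemma kap_lt_one {q : ℕ} (hq : 2 < q) : kap q < 1 := by
  have : (0 : ℝ) < 1 / q := by positivity
  unfold kap
  rw [Real.sqrt_lt' one_pos, Real.sqrt_lt' (by norm_num)]
  linarith

lemma ww_nonneg {q : ℕ} (hq : 2 < q) (n b : ℕ) : 0 ≤ ww q n b := by
  have := kap_pos hq
  have := gg_pos b
  unfold ww
  split_ifs <;> positivity

/-- Bounds the dense part by summing over types: two of the three factors `Es` are absorbed by
`type_sum_le`, and the remaining sum factors over the `n` characters. -/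
lemma dense_bound {n q : ℕ} (hn : Fintype.card G = n) (hq : 2 < q) :
    ∑ χ : Fin n → AddChar G ℂ, (if ∀ ψ, n < q * (n - cnt χ ψ) then |phi χ| ^ 3 else 0)
      ≤ (kap q * ∑ b ∈ range (n + 1), ww q n b) ^ n := by
  have hn0 : (0 : ℝ) < n := by rw [← hn]; exact card_pos'
  have hk := kap_pos hq
  have hsn : 0 < √(n : ℝ) := Real.sqrt_pos.2 hn0
  set Φ : (AddChar G ℂ → ℕ) → ℝ := fun a =>
    if (∀ ψ, n < q * (n - a ψ)) ∧ ∑ ψ, a ψ = n then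
      (∏ ψ, gg (a ψ) ^ 3 * √(a ψ : ℝ) ^ a ψ) / √(n : ℝ) ^ (3 * n) else 0 with hΦ
  have hΦ0 : ∀ a, 0 ≤ Φ a := by
    intro a
    simp only [hΦ]
    split_ifs
    · refine div_nonneg (Finset.prod_nonneg fun ψ _ => ?_) (by positivity)
      have := gg_pos (a ψ)
      positivity
    · exact le_rfl
  have h1 : ∀ χ : Fin n → AddChar G ℂ, (if ∀ ψ, n < q * (n - cnt χ ψ) then |phi χ| ^ 3 else 0)
      ≤ Es χ ^ 2 * Φ (cnt χ) := by
    intro χ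
    have hcs : ∑ ψ, cnt χ ψ = n := by rw [sum_cnt, Fintype.card_fin]
    simp only [hΦ, hcs, and_true]
    split_ifs with h
    · have e1 := phi_le_gg hn χ
      calc |phi χ| ^ 3 ≤ ((∏ ψ, gg (cnt χ ψ)) * Es χ / √(n : ℝ) ^ n) ^ 3 := by gcongr
        _ = _ := by
          rw [Finset.prod_mul_distrib, Finset.prod_pow, ← Es]
          rw [div_pow, mul_pow, ← pow_mul, mul_comm n 3]
          ring
    · simp
  refine (Finset.sum_le_sum fun χ _ => h1 χ).trans ?_
  have h2 := type_sum_le (ι := Fin n) Φ hΦ0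
  rw [Fintype.card_fin] at h2
  refine h2.trans ?_
  have h3 : ∀ a : AddChar G ℂ → ℕ, (n : ℝ) ^ n * Φ a ≤ kap q ^ n * ∏ ψ, ww q n (a ψ) := by
    intro a
    simp only [hΦ]
    split_ifs with h
    · obtain ⟨hd, hs⟩ := h
      have e1 : ∀ ψ, ww q n (a ψ) = gg (a ψ) ^ 3 * √(a ψ : ℝ) ^ a ψ
          / (√(n : ℝ) ^ a ψ * kap q ^ a ψ) := by
        intro ψ
        unfold ww
        rw [if_pos (hd ψ)]
        split_ifs with h0
        · simp [h0, gg]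
        · rw [Real.sqrt_div (by positivity), div_pow, div_pow]
          field_simp
      rw [Finset.prod_congr rfl fun ψ _ => e1 ψ, Finset.prod_div_distrib, Finset.prod_mul_distrib
        (f := fun ψ => √(n : ℝ) ^ a ψ), Finset.prod_pow_eq_pow_sum, Finset.prod_pow_eq_pow_sum, hs]
      have e4 : (n : ℝ) ^ n = √(n : ℝ) ^ n * √(n : ℝ) ^ n := by
        rw [← mul_pow, Real.mul_self_sqrt hn0.le]
      rw [e4, mul_comm 3 n, pow_mul]
      apply le_of_eq
      field_simp
    · rw [mul_zero]
      have := Finset.prod_nonneg (s := univ) fun ψ (_ : ψ ∈ univ) => ww_nonneg hq n (a ψ)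
      positivity
  rw [Finset.mul_sum]
  refine (Finset.sum_le_sum fun a _ => h3 a).trans ?_
  rw [← Finset.mul_sum, ← Finset.prod_univ_sum
    (fun _ : AddChar G ℂ => range (n + 1)) (fun _ b => ww q n b), Finset.prod_const,
    Finset.card_univ, AddChar.card_eq, hn, mul_pow]

open Filter Topology in
/-- Dominated convergence: the term `b = 0` equals `1`, every other term tends to `0`, and the
terms are at most `gg b ^ 3 * kap q ^ b`, uniformly in `n`. -/
lemma tendsto_ww {q : ℕ} (hq : 2 < q) :
    Tendsto (fun n => ∑ b ∈ range (n + 1), ww q n b) atTop (𝓝 1) := by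
  have hk := kap_pos hq
  have hk1 := kap_lt_one hq
  have h1 : ∀ n, ∑ b ∈ range (n + 1), ww q n b = ∑' b, ww q n b := by
    intro n
    rw [tsum_eq_sum]
    intro b hb
    have hb' : n < b := by simpa using hb
    unfold ww
    rw [if_neg (by omega), if_neg]
    rw [Nat.sub_eq_zero_of_le hb'.le]
    simp
  have h2 : ∑' b : ℕ, (if b = 0 then (1 : ℝ) else 0) = 1 := tsum_ite_eq 0 _
  simp only [h1]
  rw [← h2]
  refine tendsto_tsum_of_dominated_convergence (bound := fun b => 27 * ((b : ℝ) ^ 2 * kap q ^ b)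
    + 27 * kap q ^ b) ?_ ?_ ?_
  · have hlt : ‖kap q‖ < 1 := by rw [Real.norm_of_nonneg hk.le]; exact hk1
    exact ((summable_pow_mul_geometric_of_norm_lt_one 2 hlt).mul_left 27).add
      ((summable_geometric_of_norm_lt_one hlt).mul_left 27)
  · intro b
    rcases Nat.eq_zero_or_pos b with rfl | hb
    · simp [ww]
    · rw [if_neg hb.ne']
      have hg := gg_pos b
      refine squeeze_zero (g := fun n : ℕ => gg b ^ 3 * (√((b : ℝ) / n) / kap q) ^ b)
        (fun n => ww_nonneg hq n b) (fun n => ?_) ?_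
      · unfold ww
        rw [if_neg hb.ne']
        split_ifs
        · exact le_rfl
        · positivity
      · have t1 : Tendsto (fun n : ℕ => (b : ℝ) / n) atTop (𝓝 0) :=
          tendsto_const_div_atTop_nhds_zero_nat _
        have t2 := (((Real.continuous_sqrt.tendsto 0).comp t1).div_const (kap q)).pow b
        have t3 := t2.const_mul (gg b ^ 3)
        simpa [hb.ne'] using t3
  · filter_upwards [eventually_gt_atTop 0] with n hn b
    rw [Real.norm_of_nonneg (ww_nonneg hq n b)]
    have hn' : (0 : ℝ) < n := by exact_mod_cast hn
    unfold ww
    split_ifs with h0 hd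
    · simp [h0]
    · have hb : (1 : ℝ) ≤ b := by exact_mod_cast Nat.pos_of_ne_zero h0
      have e1 : √((b : ℝ) / n) / kap q ≤ kap q := by
        rw [div_le_iff₀ hk]
        have hkk : kap q * kap q = √(1 - 1 / (q : ℝ)) := by
          unfold kap
          exact Real.mul_self_sqrt (by positivity)
        rw [hkk]
        refine Real.sqrt_le_sqrt ?_
        have hq0 : (0 : ℝ) < q := by exact_mod_cast (by omega : 0 < q)
        have hbn : b ≤ n := by
          by_contra hc
          rw [Nat.sub_eq_zero_of_le (by omega)] at hd
          omega
        have hd' : (n : ℝ) < q * (n - b) := by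
          rw [← Nat.cast_sub hbn]; exact_mod_cast hd
        rw [div_le_iff₀ hn']
        have : (1 - 1 / (q : ℝ)) * n = n - n / q := by ring
        rw [this]
        have : (n : ℝ) / q < n - b := by rw [div_lt_iff₀ hq0]; linarith
        linarith
      have e2 : gg b ^ 3 ≤ 27 * (b : ℝ) ^ 2 := by
        rw [gg, if_neg h0, mul_pow]
        have : √(b : ℝ) ^ 3 ≤ √(b : ℝ) ^ 4 :=
          pow_le_pow_right₀ (Real.one_le_sqrt.2 hb) (by norm_num)
        have h4 : √(b : ℝ) ^ 4 = (b : ℝ) ^ 2 := by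
          rw [show ∀ y : ℝ, y ^ 4 = (y ^ 2) ^ 2 by intro y; ring, Real.sq_sqrt (by positivity)]
        rw [h4] at this
        norm_num
        linarith
      have hg := gg_pos b
      calc gg b ^ 3 * (√((b : ℝ) / n) / kap q) ^ b ≤ (27 * (b : ℝ) ^ 2) * kap q ^ b := by gcongr
        _ ≤ _ := by
          have : 0 ≤ kap q ^ b := by positivity
          linarith
    · positivity

open Filter Topology in
lemma tendsto_dense {q : ℕ} (hq : 2 < q) :
    Tendsto (fun n => (kap q * ∑ b ∈ range (n + 1), ww q n b) ^ n) atTop (𝓝 0) := by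
  have hk := kap_pos hq
  have hk1 := kap_lt_one hq
  have h1 := (tendsto_ww hq).const_mul (kap q)
  rw [mul_one] at h1
  have h2 : ∀ᶠ n in atTop, kap q * ∑ b ∈ range (n + 1), ww q n b < (1 + kap q) / 2 :=
    h1.eventually_lt_const (by linarith)
  refine squeeze_zero' (g := fun n => ((1 + kap q) / 2) ^ n) ?_ ?_
    (tendsto_pow_atTop_nhds_zero_of_lt_one (by linarith) (by linarith))
  · filter_upwards with n
    exact pow_nonneg (mul_nonneg hk.le (Finset.sum_nonneg fun b _ => ww_nonneg hq n b)) _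
  · filter_upwards [h2] with n hn
    exact pow_le_pow_left₀ (mul_nonneg hk.le (Finset.sum_nonneg fun b _ => ww_nonneg hq n b))
      hn.le n

end Fourier
/-! ### Passage to the limit -/

section Assembly

open Filter Topology

/-- Bundled finite abelian groups, so that limits over all groups of growing order are limits along
a filter. -/
structure Grp where
  carrier : Type
  [grp : AddCommGroup carrier]
  [fin : Fintype carrier]

attribute [instance] Grp.grp Grp.fin

/-- The order of a bundled group. -/
def ord (H : Grp) : ℕ := Fintype.card H.carrier

/-- The filter of groups whose order tends to infinity. -/
noncomputable def large : Filter Grp := comap ord atTop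

lemma tendsto_ord : Tendsto ord large atTop := tendsto_comap

/-- The contribution of the tuples with exactly `m ≤ n / q` nontrivial entries. -/
noncomputable def sparseTerm (q : ℕ) (H : Grp) (m : ℕ) : ℝ :=
  if q * m ≤ ord H then ((ord H).choose m : ℝ) * S H.carrier m else 0

lemma tendsto_pp : Tendsto (fun H : Grp => pp H.carrier) large (𝓝 0) := by
  have h : Tendsto (fun n : ℕ => (√(n : ℝ))⁻¹) atTop (𝓝 0) :=
    tendsto_inv_atTop_zero.comp (Real.tendsto_sqrt_atTop.comp tendsto_natCast_atTop_atTop)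
  exact h.comp tendsto_ord

lemma tendsto_choose_div (m : ℕ) :
    Tendsto (fun n : ℕ => (n.choose m : ℝ) / (n : ℝ) ^ m) atTop (𝓝 (1 / m.factorial)) := by
  have h := isEquivalent_choose m
  have h1 := (h.div (Asymptotics.IsEquivalent.refl (u := fun n : ℕ => (n : ℝ) ^ m)))
  refine (h1.symm.tendsto_nhds ?_)
  refine tendsto_const_nhds.congr' ?_
  filter_upwards [eventually_gt_atTop 0] with n hn
  have : (n : ℝ) ^ m ≠ 0 := by positivity
  have h2 : (m.factorial : ℝ) ≠ 0 := by positivity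
  simp only [Pi.div_apply]
  field_simp

lemma tendsto_sparseTerm (q m : ℕ) :
    Tendsto (fun H => sparseTerm q H m) large (𝓝 (ell m / m.factorial)) := by
  obtain ⟨K, hK, hS⟩ := S_limit m
  have h1 : Tendsto (fun H : Grp => (ord H : ℝ) ^ m * S H.carrier m) large (𝓝 (ell m)) := by
    rw [tendsto_iff_norm_sub_tendsto_zero]
    have hz : Tendsto (fun H : Grp => K * pp H.carrier) large (𝓝 0) := by
      simpa using tendsto_pp.const_mul K
    refine squeeze_zero' (Eventually.of_forall fun _ => norm_nonneg _) ?_ hz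
    filter_upwards [tendsto_ord.eventually (eventually_ge_atTop (2 * m))] with H hH
    exact hS H.carrier hH
  have h2 := ((tendsto_choose_div m).comp tendsto_ord).mul h1
  rw [show ell m / (m.factorial : ℝ) = 1 / m.factorial * ell m by ring]
  refine h2.congr' ?_
  filter_upwards [tendsto_ord.eventually (eventually_ge_atTop (q * m)),
    tendsto_ord.eventually (eventually_gt_atTop 0)] with H hH h0
  have h3 : (ord H : ℝ) ^ m ≠ 0 := by positivity
  simp only [sparseTerm, if_pos hH, Function.comp]
  field_simp

/-- Tannery's theorem with the majorant of `sparse_bound`. -/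
lemma tendsto_sparse {q : ℕ} (hq : q = 2304 ^ 4) :
    Tendsto (fun H => ∑ m ∈ range (ord H + 1), sparseTerm q H m) large (𝓝 (Real.exp (-(1 / 2)))) := by
  have hq1 : 1 ≤ q := by rw [hq]; norm_num
  have h := tendsto_tsum_of_dominated_convergence (𝓕 := large) (f := fun H m => sparseTerm q H m)
    (g := fun m => ell m / m.factorial) summable_bound (fun m => tendsto_sparseTerm q m)
    (Eventually.of_forall fun H m => by
      unfold sparseTerm
      split_ifs with hm
      · rw [hq] at hm
        exact sparse_bound hm
      · rw [norm_zero]; positivity)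
  rw [hasSum_ell.tsum_eq] at h
  refine h.congr fun H => ?_
  refine tsum_eq_sum fun m hm => ?_
  rw [mem_range, not_lt] at hm
  refine if_neg (not_le.2 ?_)
  nlinarith

/-- The normalised sum of cubes tends to `e ^ (-1/2)`, uniformly over the groups with `∑ x, x = 0`.
-/
lemma main_aux {ε : ℝ} (hε : 0 < ε) : ∃ N : ℕ, ∀ n : ℕ, N ≤ n →
      ∀ (G : Type) [AddCommGroup G] [Fintype G], Fintype.card G = n →
        (∑ x : G, x) = 0 →
        |(∑ χ : Fin n → AddChar G ℂ, phi χ ^ 3) / n - Real.exp (-(1 / 2))| ≤ ε := by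
  obtain ⟨q, hq⟩ : ∃ q : ℕ, q = 2304 ^ 4 := ⟨_, rfl⟩
  have hq2 : 2 < q := by rw [hq]; norm_num
  have h1 := (Metric.tendsto_nhds.1 (tendsto_sparse hq) (ε / 2) (by positivity))
  obtain ⟨N₁, hN₁⟩ := eventually_atTop.1 (eventually_comap.1 h1)
  obtain ⟨N₂, hN₂⟩ := eventually_atTop.1
    (Metric.tendsto_nhds.1 (tendsto_dense hq2) (ε / 2) (by positivity))
  refine ⟨N₁ + N₂ + 1, fun n hn G _ _ hc hG => ?_⟩
  have h0 : 0 < n := by omega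
  have hn1 : (1 : ℝ) ≤ n := by exact_mod_cast h0
  have hs := hN₁ n (by omega) ⟨G⟩ hc
  have hd := hN₂ n (by omega)
  rw [Real.dist_eq] at hs hd
  rw [sub_zero] at hd
  have hdb := (dense_bound hc hq2).trans ((le_abs_self _).trans hd.le)
  rw [sum_decomp hc hG h0 hq2]
  have hord : ord ⟨G⟩ = n := hc
  simp only [sparseTerm, hord] at hs
  set D := ∑ χ : Fin n → AddChar G ℂ, if ∀ ψ, n < q * (n - cnt χ ψ) then phi χ ^ 3 else 0
    with hD
  have hDle : |D| ≤ ε / 2 := by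
    refine (abs_sum_le_sum_abs _ _).trans (le_trans (sum_le_sum fun χ _ => ?_) hdb)
    split_ifs
    · rw [abs_pow]
    · simp
  have hDn : |D / n| ≤ ε / 2 := by
    rw [abs_div, Nat.abs_cast]
    exact (div_le_self (abs_nonneg _) hn1).trans hDle
  rw [add_div, mul_div_cancel_left₀ _ (by positivity)]
  rw [abs_lt] at hs
  rw [abs_le] at hDn ⊢
  constructor <;> linarith [hs.1, hs.2, hDn.1, hDn.2]

end Assembly

end AddTriples

/-- For every `ε > 0` there exists `N` such that for all `n ≥ N` and every finite abelian
group `G` of order `n` with `Σ G = 0`, the number `T` of additive triples, i.e. triples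
`(π₁, π₂, π₃)` of bijections `Fin n → G` with `π₁ + π₂ = π₃` (pointwise addition),
satisfies `|T · n^{n-1}/(n!)³ − e^{-1/2}| ≤ ε`. -/
theorem additive_triples_asymptotic :
    ∀ ε : ℝ, 0 < ε → ∃ N : ℕ, ∀ n : ℕ, N ≤ n →
      ∀ (G : Type) [AddCommGroup G] [Fintype G], Fintype.card G = n →
        (∑ x : G, x) = 0 →
        |(Nat.card {p : (Fin n → G) × (Fin n → G) × (Fin n → G) //
            Function.Bijective p.1 ∧ Function.Bijective p.2.1 ∧ Function.Bijective p.2.2 ∧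
            p.1 + p.2.1 = p.2.2} : ℝ) * (n : ℝ) ^ (n - 1) / (n.factorial : ℝ) ^ 3
          - Real.exp (-(1 / 2))| ≤ ε := by
  intro ε hε
  obtain ⟨N, hN⟩ := AddTriples.main_aux hε
  refine ⟨N + 1, fun n hn G _ _ hc hG => ?_⟩
  rw [AddTriples.triple_count hc (by omega)]
  exact hN n (by omega) G hc hG
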